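/- arXiv:2412.03482 — 3 statements merged into one kernel-verified Lean document; each statement's English description precedes it below -/
import Mathlib

section
/- Let (R_i)_{i∈I} be an infinite family of pairwise disjoint equivalent out-rays in a digraph D, and for each i ∈ I let v_i be a vertex of R_i. Then there exist an infinite subset J ⊆ I and an out-ray S in D such that for every j ∈ J, the ray S avoids the initial segment of R_j up to v_j, and S intersects R_j in infinitely many vertices. -/
variable {V : Type*}

/-- An out-ray: a one-way infinite directed path oriented away from its start. -/
def IsOutRay (D : Digraph V) (f : ℕ → V) : Prop :=
  Function.Injective f ∧ ∀ n, D.Adj (f n) (f (n + 1))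

/-- An in-ray: a one-way infinite directed path oriented towards its start. -/
def IsInRay (D : Digraph V) (f : ℕ → V) : Prop :=
  Function.Injective f ∧ ∀ n, D.Adj (f (n + 1)) (f n)

/-- A finite directed path, given as a nonempty duplicate-free list of vertices. -/
def IsDipath (D : Digraph V) (p : List V) : Prop :=
  p ≠ [] ∧ p.Nodup ∧ p.Chain' D.Adj

def StartsIn (p : List V) (A : Set V) : Prop := ∃ a ∈ A, p.head? = some a

def EndsIn (p : List V) (B : Set V) : Prop := ∃ b ∈ B, p.getLast? = some b

def ListsDisjoint (p q : List V) : Prop := ∀ v ∈ p, v ∉ q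

/-- There are infinitely many pairwise disjoint directed A–B paths. -/
def ManyDisjointPaths (D : Digraph V) (A B : Set V) : Prop :=
  ∃ P : ℕ → List V,
    (∀ n, IsDipath D (P n) ∧ StartsIn (P n) A ∧ EndsIn (P n) B) ∧
    ∀ m n, m ≠ n → ListsDisjoint (P m) (P n)

/-- Two rays are equivalent: infinitely many disjoint paths in both directions. -/
def EquivRays (D : Digraph V) (R₁ R₂ : ℕ → V) : Prop :=
  ManyDisjointPaths D (Set.range R₁) (Set.range R₂) ∧
  ManyDisjointPaths D (Set.range R₂) (Set.range R₁)

/-- The path `P` ends on the ray `f` and is disjoint from the rest of `f`. -/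
def LeadsInto (P : List V) (f : ℕ → V) : Prop :=
  ∃ m, P.getLast? = some (f m) ∧ ∀ n, m < n → f n ∉ P

/-- `P` is a directed path avoiding the initial segment of `R k` up to `v k` for each `k ∈ L`. -/
structure AvoidingPath {I : Type*} (D : Digraph V) (R : I → ℕ → V) (v : I → ℕ)
    (L : List I) (P : List V) : Prop where
  nodup : P.Nodup
  chain : P.IsChain D.Adj
  avoid : ∀ k ∈ L, ∀ n ≤ v k, R k n ∉ P

/-- Infinitely many disjoint paths contain one that avoids a given finite set. -/
theorem ManyDisjointPaths.exists_avoiding {D : Digraph V} {A B X : Set V}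
    (h : ManyDisjointPaths D A B) (hX : X.Finite) :
    ∃ p, IsDipath D p ∧ StartsIn p A ∧ EndsIn p B ∧ ∀ x ∈ p, x ∉ X := by
  obtain ⟨P, hP, hd⟩ := h
  by_contra! hc
  choose f hf hfX using fun n => hc (P n) (hP n).1 (hP n).2.1 (hP n).2.2
  have hinj : Function.Injective f := by
    intro m n hmn
    by_contra hne
    exact hd m n hne (f m) (hf m) (hmn ▸ hf n)
  exact Set.infinite_of_injective_forall_mem hinj hfX hX

theorem List.exists_first_mem {p : List V} {B : Set V} (h : ∃ b ∈ p, b ∈ B) :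
    ∃ l₁ b l₂, p = l₁ ++ b :: l₂ ∧ b ∈ B ∧ ∀ x ∈ l₁, x ∉ B := by
  induction p with
  | nil => simp at h
  | cons a p ih =>
    by_cases ha : a ∈ B
    · exact ⟨[], a, p, by simp, ha, by simp⟩
    · obtain ⟨l₁, b, l₂, rfl, hb, hl⟩ := ih (by simpa [ha] using h)
      exact ⟨a :: l₁, b, l₂, by simp, hb, by simpa [ha] using hl⟩

theorem List.exists_last_mem {p : List V} {A : Set V} (h : ∃ a ∈ p, a ∈ A) :
    ∃ l₁ a l₂, p = l₁ ++ a :: l₂ ∧ a ∈ A ∧ ∀ x ∈ l₂, x ∉ A := by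
  obtain ⟨l₁, a, l₂, hp, ha, hl⟩ :=
    List.exists_first_mem (p := p.reverse) (B := A) (by simpa using h)
  refine ⟨l₂.reverse, a, l₁.reverse, ?_, ha, by simpa using hl⟩
  rw [← List.reverse_reverse p, hp]
  simp

/-- A path from `A` to a set `B` disjoint from `A` contains one whose inner vertices avoid both. -/
theorem IsDipath.exists_inner_avoiding {D : Digraph V} {A B : Set V} {p : List V}
    (hp : IsDipath D p) (hA : StartsIn p A) (hB : EndsIn p B) (hAB : Disjoint A B) :
    ∃ a l b, a :: (l ++ [b]) <:+: p ∧ a ∈ A ∧ b ∈ B ∧ (∀ x ∈ l, x ∉ A) ∧ ∀ x ∈ l, x ∉ B := by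
  obtain ⟨a₀, ha₀, hhead⟩ := hA
  obtain ⟨b₀, hb₀, hlast⟩ := hB
  obtain ⟨l₁, b, l₂, rfl, hb, hl₁⟩ :=
    List.exists_first_mem ⟨b₀, List.mem_of_getLast? hlast, hb₀⟩
  have ha₀l : a₀ ∈ l₁ := by
    cases l₁ with
    | nil =>
      have : b = a₀ := by simpa using hhead
      exact absurd hb (this ▸ hAB.notMem_of_mem_left ha₀)
    | cons x l =>
      have : x = a₀ := by simpa using hhead
      simp [this]
  obtain ⟨k₁, a, k₂, rfl, ha, hk₂⟩ := List.exists_last_mem ⟨a₀, ha₀l, ha₀⟩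
  exact ⟨a, k₂, b, ⟨k₁, l₂, by simp⟩, ha, hb, hk₂, fun x hx => hl₁ x (by simp [hx])⟩

theorem Function.Injective.exists_bound_of_mem_list {f : ℕ → V} (hf : Function.Injective f)
    (P : List V) : ∃ B, ∀ n, f n ∈ P → n ≤ B := by
  have hfin : (f ⁻¹' {x | x ∈ P}).Finite := P.finite_toSet.preimage hf.injOn
  obtain ⟨B, hB⟩ := hfin.bddAbove
  exact ⟨B, fun n hn => hB hn⟩

/-- A path leading into `R i` can be extended so as to lead into any prescribed ray `R j`. -/
theorem AvoidingPath.extend {I : Type*} {D : Digraph V} {R : I → ℕ → V} {v : I → ℕ}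
    (hray : ∀ i, IsOutRay D (R i))
    (hdisj : ∀ i j, i ≠ j → ∀ n m, R i n ≠ R j m)
    (hequiv : ∀ i j, i ≠ j → EquivRays D (R i) (R j))
    {L : List I} {P : List V} (hP : AvoidingPath D R v L P) {i : I} (hi : i ∈ L)
    (hPi : LeadsInto P (R i)) (j : I) :
    ∃ Q, Q ≠ [] ∧ AvoidingPath D R v L (P ++ Q) ∧ LeadsInto (P ++ Q) (R j) := by
  obtain ⟨m, hm, htail⟩ := hPi
  have hmem : R i m ∈ P := List.mem_of_getLast? hm
  have hvm : v i < m := by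
    by_contra! h
    exact hP.avoid i hi m h hmem
  have hseg : ∀ k ∈ L, ∀ n ≤ v k, ∀ n', m < n' → R k n ≠ R i n' := by
    intro k _ n hn n' hn' h
    by_cases hki : k = i
    · subst hki
      have := (hray k).1 h
      omega
    · exact hdisj k i hki _ _ h
  by_cases hij : i = j
  · subst hij
    refine ⟨[R i (m + 1)], by simp, ⟨?_, ?_, ?_⟩, m + 1, by simp, ?_⟩
    · simpa [List.nodup_append, hP.nodup] using
        fun a ha => ne_of_mem_of_not_mem ha (htail (m + 1) (by omega))
    · simpa [List.isChain_append, hP.chain, hm] using (hray i).2 m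
    · intro k hk n hn
      simpa [hP.avoid k hk n hn] using hseg k hk n hn (m + 1) (by omega)
    · intro n hn
      have : R i n ≠ R i (m + 1) := (hray i).1.ne (by omega)
      simpa [this] using htail n (by omega)
  obtain ⟨B, hB⟩ := (hray j).1.exists_bound_of_mem_list P
  let X : Set V := {x | x ∈ P} ∪ R i '' Set.Iic m ∪ R j '' Set.Iic B ∪
    ⋃ k ∈ {k | k ∈ L}, R k '' Set.Iic (v k)
  have hX : X.Finite :=
    ((P.finite_toSet.union ((Set.finite_Iic m).image _)).union
      ((Set.finite_Iic B).image _)).union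
      (L.finite_toSet.biUnion fun k _ => (Set.finite_Iic (v k)).image _)
  obtain ⟨p, hp, hpi, hpj, hpX⟩ := (hequiv i j hij).1.exists_avoiding hX
  have hdis : Disjoint (Set.range (R i)) (Set.range (R j)) := by
    rw [Set.disjoint_left]
    rintro _ ⟨n, rfl⟩ ⟨n', h⟩
    exact hdisj i j hij n n' h.symm
  obtain ⟨_, l, _, hinf, ⟨z, rfl⟩, ⟨w, rfl⟩, hli, hlj⟩ :=
    hp.exists_inner_avoiding hpi hpj hdis
  have hqX : ∀ x ∈ R i z :: (l ++ [R j w]), x ∉ X := fun x hx => hpX x (hinf.subset hx)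
  have hqnodup : (R i z :: (l ++ [R j w])).Nodup := hp.2.1.sublist hinf.sublist
  have hqchain : (R i z :: (l ++ [R j w])).IsChain D.Adj := List.IsChain.infix hp.2.2 hinf
  have hmz : m < z := by
    by_contra! h
    exact hqX (R i z) (by simp) (.inl (.inl (.inr ⟨z, h, rfl⟩)))
  have hBw : B < w := by
    by_contra! h
    exact hqX (R j w) (by simp) (.inl (.inr ⟨w, h, rfl⟩))
  obtain ⟨d, rfl⟩ := Nat.exists_eq_add_of_lt hmz
  have hsegmem : ∀ x ∈ (List.range' (m + 1) d).map (R i),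
      ∃ n, m < n ∧ n < m + d + 1 ∧ x = R i n := by
    intro x hx
    obtain ⟨n, hn, rfl⟩ := List.mem_map.1 hx
    rw [List.mem_range'_1] at hn
    exact ⟨n, by omega, by omega, rfl⟩
  have hnewmem : ∀ x ∈ (List.range' (m + 1) d).map (R i) ++ R i (m + d + 1) :: (l ++ [R j w]),
      (∃ n, m < n ∧ x = R i n) ∨ x ∈ l ∨ x = R j w := by
    intro x hx
    simp only [List.mem_append, List.mem_cons, List.not_mem_nil, or_false] at hx
    rcases hx with hx | rfl | hx | rfl
    · obtain ⟨n, hn, -, rfl⟩ := hsegmem x hx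
      exact .inl ⟨n, hn, rfl⟩
    · exact .inl ⟨_, hmz, rfl⟩
    · exact .inr (.inl hx)
    · exact .inr (.inr rfl)
  refine ⟨(List.range' (m + 1) d).map (R i) ++ R i (m + d + 1) :: (l ++ [R j w]), by simp,
    ⟨?_, ?_, ?_⟩, w, by simp [List.getLast?_append, List.getLast?_cons], ?_⟩
  · refine List.nodup_append.2 ⟨hP.nodup, List.nodup_append.2
      ⟨(List.nodup_range' (step := 1)).map (hray i).1, hqnodup, ?_⟩, ?_⟩
    · rintro x hx y hy rfl
      obtain ⟨n, hn, hn', rfl⟩ := hsegmem x hx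
      simp only [List.mem_append, List.mem_cons, List.not_mem_nil, or_false] at hy
      rcases hy with hy | hy | hy
      · have := (hray i).1 hy
        omega
      · exact hli _ hy ⟨n, rfl⟩
      · exact hdisj i j hij _ _ hy
    · rintro x hx y hy rfl
      rcases List.mem_append.1 hy with hy | hy
      · obtain ⟨n, hn, hn', rfl⟩ := hsegmem x hy
        exact htail n hn hx
      · exact hqX x hy (.inl (.inl (.inl hx)))
  · have hray_chain : ∀ d s, ((List.range' s (d + 1)).map (R i)).IsChain D.Adj := by
      intro d s
      rw [List.isChain_map]
      refine (List.isChain_range' s (d + 1) 1).imp fun a b h => ?_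
      subst h
      exact (hray i).2 a
    have hlast : ∀ x ∈ P.getLast?, ∀ y ∈ ((List.range' (m + 1) d).map (R i) ++
        R i (m + d + 1) :: (l ++ [R j w])).head?, D.Adj x y := by
      intro x hx y hy
      obtain rfl : R i m = x := by simpa [hm] using hx
      obtain rfl : R i (m + 1) = y := by cases d <;> simpa [List.range'_succ] using hy
      exact (hray i).2 m
    refine List.isChain_append.2 ⟨hP.chain, ?_, hlast⟩
    refine List.isChain_split.2 ⟨?_, hqchain⟩
    have := hray_chain d (m + 1)
    rwa [List.range'_concat, List.map_append, show m + 1 + 1 * d = m + d + 1 by omega] at this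
  · intro k hk n hn hx
    rcases List.mem_append.1 hx with hx | hx
    · exact hP.avoid k hk n hn hx
    have hkX : R k n ∈ X := .inr (Set.mem_biUnion hk ⟨n, hn, rfl⟩)
    rcases hnewmem _ hx with ⟨n', hn', h⟩ | h | h
    · exact hseg k hk n hn n' hn' h
    · exact hqX _ (by simp [h]) hkX
    · exact hqX _ (by simp [h]) hkX
  · intro n hn hx
    rcases List.mem_append.1 hx with hx | hx
    · have := hB n hx
      omega
    rcases hnewmem _ hx with ⟨n', -, h⟩ | h | h
    · exact hdisj i j hij _ _ h.symm
    · exact hlj _ h ⟨n, rfl⟩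
    · have := (hray j).1 h
      omega

/-- Only finitely many of a family of disjoint rays meet a given finite path. -/
theorem exists_new_index {I : Type*} [Infinite I] {R : I → ℕ → V}
    (hdisj : ∀ i j, i ≠ j → ∀ n m, R i n ≠ R j m) (L : List I) (P : List V) :
    ∃ j, j ∉ L ∧ ∀ n, R j n ∉ P := by
  have hfin : {j | ∃ n, R j n ∈ P}.Finite := by
    have hsub : ∀ j : {j | ∃ n, R j n ∈ P}, ∃ n, R j n ∈ P := fun j => j.2
    choose n hn using hsub
    have : Finite {x | x ∈ P} := P.finite_toSet
    refine Finite.of_injective (fun j => (⟨R j (n j), hn j⟩ : {x | x ∈ P})) ?_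
    intro j k h
    by_contra hne
    exact hdisj j k (fun h => hne (Subtype.ext h)) _ _ (congrArg Subtype.val h)
  obtain ⟨j, hj⟩ := (L.finite_toSet.union hfin).exists_notMem
  exact ⟨j, fun h => hj (.inl h), fun n h => hj (.inr ⟨n, h⟩)⟩

/-- An increasing sequence of lists whose lengths grow converges to an infinite sequence. -/
theorem List.exists_limit_of_prefix {α : Type*} {A : ℕ → List α}
    (hpre : ∀ n, A n <+: A (n + 1)) (hlen : ∀ n, n < (A n).length) :
    ∃ f : ℕ → α, ∀ n k (h : k < (A n).length), (A n)[k] = f k := by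
  have hmono : ∀ m n, m ≤ n → A m <+: A n := fun m n hmn =>
    Nat.le_induction (List.prefix_refl _) (fun n _ ih => ih.trans (hpre n)) n hmn
  refine ⟨fun k => (A k)[k]'(hlen k), fun n k h => ?_⟩
  rcases le_total n k with hnk | hnk
  · exact (hmono n k hnk).getElem h
  · exact ((hmono k n hnk).getElem (hlen k)).symm

/-- Lemma 4.7: for an infinite family of disjoint equivalent out-rays and chosen vertices
`v i = R i (v i)` on each ray, there are an infinite subfamily `J` and an out-ray `S`
avoiding each initial segment up to `v j` and meeting each `R j` (`j ∈ J`) infinitely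
often. -/
theorem stmt7 {I : Type*} [Infinite I] (D : Digraph V) (R : I → ℕ → V) (v : I → ℕ)
    (hray : ∀ i, IsOutRay D (R i))
    (hdisj : ∀ i j, i ≠ j → ∀ n m, R i n ≠ R j m)
    (hequiv : ∀ i j, i ≠ j → EquivRays D (R i) (R j)) :
    ∃ J : Set I, J.Infinite ∧ ∃ S : ℕ → V, IsOutRay D S ∧
      ∀ j ∈ J, (∀ n : ℕ, ∀ m ≤ v j, S n ≠ R j m) ∧
        {n : ℕ | S n ∈ Set.range (R j)}.Infinite := by
  let Good : List I × List V → Prop := fun s =>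
    s.1.Nodup ∧ AvoidingPath D R v s.1 s.2 ∧ ∃ i ∈ s.1, LeadsInto s.2 (R i)
  have hstep : ∀ (n : ℕ) (s : List I × List V), Good s → ∃ s', Good s' ∧ s.1 <+: s'.1 ∧
      s'.1.length = s.1.length + 1 ∧ s.2 <+: s'.2 ∧ s.2.length < s'.2.length ∧
      ∀ h : n < s'.1.length, LeadsInto s'.2 (R s'.1[n]) := by
    rintro n ⟨L, P⟩ ⟨hL, hP, i, hi, hPi⟩
    obtain ⟨j, hjL, hj⟩ := exists_new_index hdisj L P
    have hP' : AvoidingPath D R v (L ++ [j]) P := by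
      refine ⟨hP.nodup, hP.chain, fun k hk m hm => ?_⟩
      rcases List.mem_append.1 hk with hk | hk
      · exact hP.avoid k hk m hm
      · obtain rfl := List.mem_singleton.1 hk
        exact hj m
    have hLj : (L ++ [j]).Nodup := by
      simpa [List.nodup_append, hL] using fun a ha => ne_of_mem_of_not_mem ha hjL
    obtain ⟨t, ht, htn⟩ : ∃ t ∈ L ++ [j], ∀ h : n < (L ++ [j]).length, (L ++ [j])[n] = t := by
      by_cases h : n < (L ++ [j]).length
      · exact ⟨_, List.getElem_mem h, fun _ => rfl⟩
      · exact ⟨j, by simp, fun h' => absurd h' h⟩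
    obtain ⟨Q, hQ, hPQ, hlead⟩ :=
      hP'.extend hray hdisj hequiv (List.mem_append_left _ hi) hPi t
    refine ⟨(L ++ [j], P ++ Q), ⟨hLj, hPQ, t, ht, hlead⟩, List.prefix_append _ _, by simp,
      List.prefix_append _ _, ?_, fun h => ?_⟩
    · simpa using List.length_pos_iff.2 hQ
    · simpa only [htn h] using hlead
  obtain ⟨i₀⟩ : Nonempty I := inferInstance
  have hstart : Good ([i₀], [R i₀ (v i₀ + 1)]) := by
    refine ⟨by simp, ⟨by simp, by simp, ?_⟩, i₀, by simp, v i₀ + 1, by simp, ?_⟩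
    · intro k hk n hn
      obtain rfl := List.mem_singleton.1 hk
      simpa using (hray k).1.ne (show n ≠ v k + 1 by omega)
    · intro n hn
      simpa using (hray i₀).1.ne (show n ≠ v i₀ + 1 by omega)
  choose next hgood hLpre hLlen hPpre hPlen hlead using hstep
  let st : ℕ → {s // Good s} := fun n =>
    Nat.rec ⟨_, hstart⟩ (fun n s => ⟨next n.unpair.1 s.1 s.2, hgood _ _ _⟩) n
  have hlenL : ∀ n, (st n).1.1.length = n + 1 := by
    intro n
    induction n with
    | zero => rfl
    | succ n ih => exact (hLlen n.unpair.1 _ (st n).2).trans (by rw [ih])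
  have hlenP : ∀ n, n < (st n).1.2.length := by
    intro n
    induction n with
    | zero => exact Nat.one_pos
    | succ n ih => exact lt_of_le_of_lt ih (hPlen n.unpair.1 _ (st n).2)
  obtain ⟨c, hc⟩ := List.exists_limit_of_prefix (A := fun n => (st n).1.1)
    (fun n => hLpre n.unpair.1 _ (st n).2) (fun n => by simp [hlenL])
  obtain ⟨S, hS⟩ := List.exists_limit_of_prefix (A := fun n => (st n).1.2)
    (fun n => hPpre n.unpair.1 _ (st n).2) hlenP
  have hcmem : ∀ n k, k ≤ n → c k ∈ (st n).1.1 := fun n k hk => by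
    rw [← hc n k (by simp only [hlenL]; omega)]
    exact List.getElem_mem _
  have hSmem : ∀ n k, k ≤ n → S k ∈ (st n).1.2 := fun n k hk => by
    rw [← hS n k (hk.trans_lt (hlenP n))]
    exact List.getElem_mem _
  have hleadS : ∀ n, LeadsInto (st (n + 1)).1.2 (R (c n.unpair.1)) := fun n => by
    have h : n.unpair.1 < (st (n + 1)).1.1.length := by
      have := n.unpair_left_le
      have := hlenL (n + 1)
      omega
    rw [← hc (n + 1) _ h]
    exact hlead n.unpair.1 _ (st n).2 h
  have hcinj : Function.Injective c := by
    intro a b hab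
    have ha : a < (st (max a b)).1.1.length := by rw [hlenL]; omega
    have hb : b < (st (max a b)).1.1.length := by rw [hlenL]; omega
    rw [← hc _ a ha, ← hc _ b hb] at hab
    exact (st (max a b)).2.1.getElem_inj_iff.1 hab
  have hSray : IsOutRay D S := by
    refine ⟨fun a b hab => ?_, fun n => ?_⟩
    · have ha : a < (st (max a b)).1.2.length := (le_max_left a b).trans_lt (hlenP _)
      have hb : b < (st (max a b)).1.2.length := (le_max_right a b).trans_lt (hlenP _)
      rw [← hS _ a ha, ← hS _ b hb] at hab
      exact (st (max a b)).2.2.1.nodup.getElem_inj_iff.1 hab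
    · have hn := hlenP (n + 1)
      rw [← hS (n + 1) n (by omega), ← hS (n + 1) (n + 1) hn]
      exact (List.isChain_iff_getElem.1 (st (n + 1)).2.2.1.chain) n hn
  refine ⟨Set.range c, Set.infinite_range_of_injective hcinj, S, hSray, ?_⟩
  rintro _ ⟨k, rfl⟩
  constructor
  · intro n m hm h
    exact (st (max n k)).2.2.1.avoid (c k) (hcmem _ _ (le_max_right _ _)) m hm
      (h ▸ hSmem _ _ (le_max_left _ _))
  · refine Set.infinite_of_forall_exists_gt fun B => ?_
    obtain ⟨n, hBn, rfl⟩ : ∃ n, B < n ∧ n.unpair.1 = k :=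
      ⟨Nat.pair k (B + 1), Nat.right_le_pair k (B + 1), by simp⟩
    obtain ⟨m, hlast, -⟩ := hleadS n
    have hlen := hlenP (n + 1)
    refine ⟨(st (n + 1)).1.2.length - 1, ⟨m, ?_⟩, by omega⟩
    rw [← hS (n + 1) _ (by omega)]
    rw [List.getLast?_eq_getElem?, List.getElem?_eq_getElem (by omega)] at hlast
    exact (Option.some.inj hlast).symm
end

section
/- For every infinite family (R_i)_{i∈I} of pairwise disjoint equivalent out-rays in a digraph D such that the auxiliary graph D^∞(I) contains an out-ray i_1 → i_2 → i_3 → ⋯ (i.e., a sequence of distinct indices with, for each n, infinitely many pairwise disjoint R_{i_n}–R_{i_{n+1}} paths internally disjoint from all rays), there exists an out-ray Ŝ in D, a strictly increasing sequence (α(n)) of indices, and a strictly increasing (along Ŝ) sequence of edges (x_n y_n) with x_n y_n an edge of R_{α(n)}, such that for every n > 1: a terminal segment of the subpath of Ŝ from y_{n−1} to x_n is a staircase visiting R_{α(1)}, R_{α(1)+1}, …, R_{α(n)} in order; the tail of Ŝ after y_n avoids the downward closure of the initial segment of Ŝ up to x_n; and x_n is the first vertex of Ŝ lying on R_{α(n)}.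 -/
variable {V : Type*}

/-- The internal vertices of a path. -/
def Internals (p : List V) : List V := p.tail.dropLast

def InternallyAvoids (p : List V) (U : Set V) : Prop := ∀ v ∈ Internals p, v ∉ U

/-- Infinitely many pairwise disjoint `A`–`B` paths whose internal vertices avoid `U`. -/
def ManyDisjointPathsAvoiding (D : Digraph V) (A B U : Set V) : Prop :=
  ∃ P : ℕ → List V,
    (∀ n, IsDipath D (P n) ∧ StartsIn (P n) A ∧ EndsIn (P n) B ∧
      InternallyAvoids (P n) U) ∧
    ∀ m n, m ≠ n → ListsDisjoint (P m) (P n)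

/-- The union of the vertex sets of a family of rays. -/
def RaysUnion {I : Type*} (R : I → ℕ → V) : Set V := ⋃ i, Set.range (R i)

/-- A non-trivial finite segment of a ray `R`, from position `s` to position `t`. -/
def IsRaySegment (R : ℕ → V) (q : List V) : Prop :=
  ∃ s t : ℕ, s < t ∧ q = (List.range (t - s + 1)).map fun m => R (s + m)

/-- `L` is a staircase for the sequence of ray-indices `seq`: a concatenation
`P₀ Q₁ P₁ ⋯ Q_{n-1} P_{n-1}` where `P k` is an `R (seq k)`–`R (seq (k+1))` path
internally disjoint from all rays and each `Q k` (for `k ≥ 1`) is a non-trivial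
segment of `R (seq k)`. -/
def IsStaircase {I : Type*} (D : Digraph V) (R : I → ℕ → V) {n : ℕ}
    (seq : Fin (n + 1) → I) (L : List V) : Prop :=
  ∃ P Q : Fin n → List V,
    (∀ k : Fin n, IsDipath D (P k) ∧
      StartsIn (P k) (Set.range (R (seq k.castSucc))) ∧
      EndsIn (P k) (Set.range (R (seq k.succ))) ∧
      InternallyAvoids (P k) (RaysUnion R)) ∧
    (∀ k : Fin n, 1 ≤ k.val → IsRaySegment (R (seq k.castSucc)) (Q k)) ∧
    (∀ k : Fin n, ∀ h : 1 ≤ k.val,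
      (P ⟨k.val - 1, by omega⟩).getLast? = (Q k).head? ∧
      (Q k).getLast? = (P k).head?) ∧
    L = (List.ofFn fun k : Fin n =>
      if k.val = 0 then P k else (Q k).tail ++ (P k).tail).flatten ∧
    IsDipath D L

/-- Downward closure of a vertex set along a family of rays: `X` together with all ray
vertices having some later vertex of their ray in `X`. -/
def DownCl {I : Type*} (R : I → ℕ → V) (X : Set V) : Set V :=
  X ∪ {v | ∃ i m, v = R i m ∧ ∃ m', m ≤ m' ∧ R i m' ∈ X}

/-- A set is closed downwards along every ray of the family. -/
def DownClosed {I : Type*} (R : I → ℕ → V) (F : Set V) : Prop :=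
  ∀ i m m', m ≤ m' → R i m' ∈ F → R i m ∈ F

theorem downClosed_downCl {I : Type*} (R : I → ℕ → V) (X : Set V)
    (hinj : ∀ i, Function.Injective (R i)) (hdisj : ∀ i j, i ≠ j → ∀ n m, R i n ≠ R j m) :
    DownClosed R (DownCl R X) := by
  rintro i m m' hm (h | ⟨j, k, hk, k', hkk, hX⟩)
  · exact Or.inr ⟨i, m, rfl, m', hm, h⟩
  · by_cases hij : i = j
    · subst hij
      have := hinj i hk
      exact Or.inr ⟨i, m, rfl, k', by omega, hX⟩
    · exact absurd hk (hdisj i j hij _ _)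

theorem downCl_mono {I : Type*} (R : I → ℕ → V) {X Y : Set V} (h : X ⊆ Y) :
    DownCl R X ⊆ DownCl R Y := by
  rintro v (hv | ⟨i, m, hv, m', hm, hX⟩)
  · exact Or.inl (h hv)
  · exact Or.inr ⟨i, m, hv, m', hm, h hX⟩

theorem finite_downCl {I : Type*} (R : I → ℕ → V) {X : Set V} (hX : X.Finite)
    (hinj : ∀ i, Function.Injective (R i)) (hdisj : ∀ i j, i ≠ j → ∀ n m, R i n ≠ R j m) :
    (DownCl R X).Finite := by
  refine hX.union ?_
  refine (hX.biUnion (t := fun x => {v | ∃ i m m', v = R i m ∧ m ≤ m' ∧ R i m' = x})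
    fun x _ => ?_).subset ?_
  · by_cases hx : ∃ i m, R i m = x
    · obtain ⟨i, k, rfl⟩ := hx
      refine ((Set.finite_Iic k).image (R i)).subset ?_
      rintro v ⟨j, m, m', rfl, hm, h⟩
      by_cases hij : j = i
      · subst hij
        exact ⟨m, (hinj j h) ▸ hm, rfl⟩
      · exact absurd h (hdisj j i hij _ _)
    · convert Set.finite_empty
      ext v
      simp only [Set.mem_ofPred_eq, Set.mem_empty_iff_false, iff_false]
      rintro ⟨i, m, m', -, -, h⟩
      exact hx ⟨i, m', h⟩
  · rintro v ⟨i, m, hv, m', hm, h⟩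
    exact Set.mem_biUnion h ⟨i, m, m', hv, hm, rfl⟩

theorem exists_list_disjoint_finite {P : ℕ → List V}
    (hP : ∀ m n, m ≠ n → ListsDisjoint (P m) (P n)) {F : Set V} (hF : F.Finite) :
    ∃ n, ∀ v ∈ P n, v ∉ F := by
  by_contra! h
  choose f hfP hfF using h
  refine Set.infinite_of_injective_forall_mem (f := f) ?_ hfF hF
  intro m n hmn
  by_contra hne
  exact hP m n hne _ (hfP m) (hmn ▸ hfP n)

/-- The `k` consecutive vertices of `r` starting at position `s`. -/
def raySegment (r : ℕ → V) (s k : ℕ) : List V := (List.range k).map fun m => r (s + m)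

theorem mem_raySegment {r : ℕ → V} {s k : ℕ} {v : V} :
    v ∈ raySegment r s k ↔ ∃ m, s ≤ m ∧ m < s + k ∧ r m = v := by
  simp only [raySegment, List.mem_map, List.mem_range]
  constructor
  · rintro ⟨m, hm, rfl⟩
    exact ⟨s + m, by omega, by omega, rfl⟩
  · rintro ⟨m, h1, h2, rfl⟩
    exact ⟨m - s, by omega, by congr 1; omega⟩

theorem nodup_raySegment {r : ℕ → V} (hr : Function.Injective r) (s k : ℕ) :
    (raySegment r s k).Nodup :=
  List.nodup_range.map fun a b h => by have := hr h; omega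

theorem raySegment_succ_right (r : ℕ → V) (s k : ℕ) :
    raySegment r s (k + 1) = raySegment r s k ++ [r (s + k)] := by
  simp [raySegment, List.range_succ]

theorem raySegment_succ_left (r : ℕ → V) (s k : ℕ) :
    raySegment r s (k + 1) = r s :: raySegment r (s + 1) k := by
  simp [raySegment, List.range_succ_eq_map, Function.comp_def, Nat.add_assoc, Nat.add_comm 1]

theorem chain_append_raySegment {D : Digraph V} {r : ℕ → V} (hr : IsOutRay D r) {L : List V}
    {u : ℕ} (hL : L.IsChain D.Adj) (hu : L.getLast? = some (r u)) (k : ℕ) :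
    (L ++ raySegment r (u + 1) k).IsChain D.Adj ∧
      (L ++ raySegment r (u + 1) k).getLast? = some (r (u + k)) := by
  induction k with
  | zero => simpa [raySegment] using ⟨hL, hu⟩
  | succ k ih =>
    rw [raySegment_succ_right, ← List.append_assoc]
    refine ⟨List.isChain_append.2 ⟨ih.1, by simp, ?_⟩, ?_⟩
    · intro x hx y hy
      rw [ih.2] at hx
      simp only [Option.mem_def, Option.some.injEq, List.head?_cons] at hx hy
      rw [← hx, ← hy, Nat.add_right_comm]
      exact hr.2 _
    · simp only [List.getLast?_append, List.getLast?_singleton, Option.some_or]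
      congr 2
      omega

theorem chain_append_of_cons {D : Digraph V} {L l : List V} {a : V}
    (hL : L.IsChain D.Adj) (ha : L.getLast? = some a) (hl : (a :: l).IsChain D.Adj) :
    (L ++ l).IsChain D.Adj ∧ (L ++ l).getLast? = (a :: l).getLast? := by
  obtain ⟨L, rfl⟩ := List.getLast?_eq_some_iff.1 ha
  rw [List.append_assoc, List.singleton_append]
  refine ⟨?_, by rw [List.getLast?_append_of_ne_nil _ (by simp)]⟩
  rw [List.isChain_append] at hL ⊢
  refine ⟨hL.1, hl, fun x hx y hy => hL.2.2 x hx y ?_⟩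
  simpa using hy

theorem exists_edge_path {D : Digraph V} {R : ℕ → ℕ → V}
    (hdisj : ∀ i j, i ≠ j → ∀ n m, R i n ≠ R j m) {i : ℕ}
    (hedge : ManyDisjointPathsAvoiding D (Set.range (R i)) (Set.range (R (i + 1))) (RaysUnion R))
    {F : Set V} (hF : F.Finite) :
    ∃ (l : List V) (t u : ℕ), IsDipath D (R i t :: (l ++ [R (i + 1) u])) ∧
      (∀ v ∈ l, v ∉ RaysUnion R) ∧ ∀ v ∈ R i t :: (l ++ [R (i + 1) u]), v ∉ F := by
  obtain ⟨P, hP, hPd⟩ := hedge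
  obtain ⟨n, hn⟩ := exists_list_disjoint_finite hPd hF
  obtain ⟨hd, ⟨_, ⟨t, rfl⟩, ht⟩, ⟨_, ⟨u, rfl⟩, hu⟩, hav⟩ := hP n
  generalize P n = p at *
  obtain ⟨p, rfl⟩ := List.head?_eq_some_iff.1 ht
  rcases List.eq_nil_or_concat p with rfl | ⟨l, b, rfl⟩
  · simp only [List.getLast?_singleton, Option.some.injEq] at hu
    exact absurd hu (hdisj _ _ (by omega) _ _)
  · simp only [List.concat_eq_append] at *
    rw [← List.cons_append, List.getLast?_append] at hu
    simp only [List.getLast?_singleton, Option.some_or, Option.some.injEq] at hu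
    subst hu
    exact ⟨l, t, u, hd, by simpa [InternallyAvoids, Internals] using hav, hn⟩

theorem exists_dipath_of_reflTransGen {D : Digraph V} {F B : Set V} {a b : V}
    (h : Relation.ReflTransGen (fun u v => D.Adj u v ∧ u ∉ F) a b) (hb : b ∈ B) (hbF : b ∉ F) :
    ∃ T : List V, (a :: T).Nodup ∧ (a :: T).IsChain D.Adj ∧ (∀ v ∈ a :: T, v ∉ F) ∧
      ∃ c ∈ B, (a :: T).getLast? = some c ∧ ∀ v ∈ a :: T, v ∈ B → v = c := by
  induction h using Relation.ReflTransGen.head_induction_on with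
  | refl => exact ⟨[], by simp, by simp, by simpa, b, hb, by simp, by simp⟩
  | @head a a' h _ ih =>
    obtain ⟨T, hnd, hch, hF, c, hc, hl, hB⟩ := ih
    by_cases haB : a ∈ B
    · exact ⟨[], by simp, by simp, by simpa using h.2, a, haB, by simp, by simp⟩
    by_cases haT : a ∈ a' :: T
    · obtain ⟨s, t, hst⟩ := List.append_of_mem haT
      rw [hst] at hnd hch hF hl hB
      refine ⟨t, (List.nodup_append.1 hnd).2.1, (List.isChain_append.1 hch).2.1,
        fun v hv => hF v (List.mem_append_right _ hv), c, hc, ?_,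
        fun v hv => hB v (List.mem_append_right _ hv)⟩
      rwa [List.getLast?_append_of_ne_nil _ (by simp)] at hl
    · refine ⟨a' :: T, List.nodup_cons.2 ⟨haT, hnd⟩, List.isChain_cons_cons.2 ⟨h.1, hch⟩, ?_,
        c, hc, by rwa [List.getLast?_cons_cons], ?_⟩
      · rintro v (_ | ⟨_, hv⟩)
        exacts [h.2, hF v hv]
      · rintro v (_ | ⟨_, hv⟩) hvB
        exacts [absurd hvB haB, hB v hv hvB]

theorem reflTransGen_of_chain {D : Digraph V} {F : Set V} {b : V} :
    ∀ {l : List V} {a : V}, (a :: l).IsChain D.Adj → (∀ v ∈ a :: l, v ∉ F) →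
      (a :: l).getLast? = some b →
      Relation.ReflTransGen (fun u v => D.Adj u v ∧ u ∉ F) a b
  | [], a, _, _, hb => by
    simp only [List.getLast?_singleton, Option.some.injEq] at hb
    exact hb ▸ .refl
  | c :: l, a, hc, hF, hb => by
    rw [List.isChain_cons_cons] at hc
    rw [List.getLast?_cons_cons] at hb
    exact .head ⟨hc.1, hF a (by simp)⟩
      (reflTransGen_of_chain hc.2 (fun v hv => hF v (List.mem_cons_of_mem _ hv)) hb)

theorem reflTransGen_of_ray {D : Digraph V} {F : Set V} {r : ℕ → V} (hr : IsOutRay D r) {m : ℕ}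
    (hF : ∀ t, m ≤ t → r t ∉ F) (k : ℕ) :
    Relation.ReflTransGen (fun u v => D.Adj u v ∧ u ∉ F) (r m) (r (m + k)) := by
  induction k with
  | zero => exact .refl
  | succ k ih => exact .tail ih ⟨hr.2 _, hF _ (by omega)⟩

/-- From a vertex of `R a` outside a finite down-closed set `F` there is a path to `R j` that
avoids `F` and meets `R j` only in its last vertex. -/
theorem exists_dipath_to_ray {D : Digraph V} {R : ℕ → ℕ → V} (hray : ∀ i, IsOutRay D (R i))
    (hequiv : ∀ i j, i ≠ j → EquivRays D (R i) (R j)) (j : ℕ) {a m : ℕ} {F : Set V}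
    (hF : F.Finite) (hdc : DownClosed R F) (hm : R a m ∉ F) :
    ∃ (T : List V) (z : ℕ), (R a m :: T).Nodup ∧ (R a m :: T).IsChain D.Adj ∧
      (∀ v ∈ R a m :: T, v ∉ F) ∧ (R a m :: T).getLast? = some (R j z) ∧
      ∀ v ∈ R a m :: T, v ∈ Set.range (R j) → v = R j z := by
  suffices h : ∃ b ∈ Set.range (R j), b ∉ F ∧
      Relation.ReflTransGen (fun u v => D.Adj u v ∧ u ∉ F) (R a m) b by
    obtain ⟨b, hb, hbF, h⟩ := h
    obtain ⟨T, h1, h2, h3, _, ⟨z, rfl⟩, h5, h6⟩ := exists_dipath_of_reflTransGen h hb hbF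
    exact ⟨T, z, h1, h2, h3, h5, h6⟩
  by_cases haj : a = j
  · subst haj
    exact ⟨_, ⟨m, rfl⟩, hm, .refl⟩
  obtain ⟨P, hP, hPd⟩ := (hequiv a j haj).1
  obtain ⟨n, hn⟩ :=
    exists_list_disjoint_finite hPd (hF.union ((Set.finite_Iio m).image (R a)))
  obtain ⟨hd, ⟨_, ⟨t, rfl⟩, ht⟩, ⟨b, hb, hu⟩⟩ := hP n
  generalize P n = p at *
  obtain ⟨p, rfl⟩ := List.head?_eq_some_iff.1 ht
  have hmt : m ≤ t := by
    by_contra h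
    exact hn (R a t) (by simp) (Or.inr ⟨t, by simpa using h, rfl⟩)
  have hpF : ∀ v ∈ R a t :: p, v ∉ F := fun v hv h => hn v hv (Or.inl h)
  refine ⟨b, hb, hpF b (List.mem_of_getLast? hu), ?_⟩
  have h1 := reflTransGen_of_ray (hray a) (F := F) (m := m)
    (fun t ht h => hm (hdc a m t ht h)) (t - m)
  rw [Nat.add_sub_cancel' hmt] at h1
  exact h1.trans (reflTransGen_of_chain hd.2.2 hpF hu)

/-- The concatenation of a staircase from its paths `P` and ray segments `Q`. -/
def stairList (P Q : ℕ → List V) (n : ℕ) : List V :=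
  (List.ofFn fun k : Fin n => if k.val = 0 then P k else (Q k).tail ++ (P k).tail).flatten

theorem stairList_succ (P Q : ℕ → List V) {n : ℕ} (hn : n ≠ 0) :
    stairList P Q (n + 1) = stairList P Q n ++ ((Q n).tail ++ (P n).tail) := by
  rw [stairList, stairList, List.ofFn_succ_last, List.flatten_append]
  simp [hn]

theorem stairList_congr {P Q P' Q' : ℕ → List V} {n : ℕ} (hP : ∀ k < n, P k = P' k)
    (hQ : ∀ k < n, Q k = Q' k) : stairList P Q n = stairList P' Q' n := by
  unfold stairList
  congr 2
  funext k
  rw [hP k k.2, hQ k k.2]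

/-- The local conditions on the pieces of a staircase along `R j, R (j + 1), …, R (j + n)`. -/
def StairPieces (D : Digraph V) (R : ℕ → ℕ → V) (j n : ℕ) (P Q : ℕ → List V) : Prop :=
  ∀ k < n, (IsDipath D (P k) ∧ StartsIn (P k) (Set.range (R (j + k))) ∧
      EndsIn (P k) (Set.range (R (j + k + 1))) ∧ InternallyAvoids (P k) (RaysUnion R)) ∧
    (1 ≤ k → IsRaySegment (R (j + k)) (Q k) ∧ (P (k - 1)).getLast? = (Q k).head? ∧
      (Q k).getLast? = (P k).head?)

theorem StairPieces.isStaircase {D : Digraph V} {R : ℕ → ℕ → V} {j n : ℕ} {P Q : ℕ → List V}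
    (h : StairPieces D R j n P Q) (hL : IsDipath D (stairList P Q n)) :
    IsStaircase D R (n := n) (fun k => j + k.val) (stairList P Q n) :=
  ⟨fun k => P k, fun k => Q k, fun k => (h k k.2).1, fun k hk => ((h k k.2).2 hk).1,
    fun k hk => ((h k k.2).2 hk).2, rfl, hL⟩

theorem exists_stairPieces {D : Digraph V} {R : ℕ → ℕ → V} (hray : ∀ i, IsOutRay D (R i))
    (hdisj : ∀ i j, i ≠ j → ∀ n m, R i n ≠ R j m)
    (hedge : ∀ i, ManyDisjointPathsAvoiding D (Set.range (R i))
      (Set.range (R (i + 1))) (RaysUnion R))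
    {F : Set V} (hF : F.Finite) (hdc : DownClosed R F) (j n : ℕ) :
    ∃ (P Q : ℕ → List V) (s u : ℕ), StairPieces D R j (n + 1) P Q ∧
      (P n).getLast? = some (R (j + n + 1) u) ∧
      (stairList P Q (n + 1)).head? = some (R j s) ∧
      (stairList P Q (n + 1)).getLast? = some (R (j + n + 1) u) ∧
      (stairList P Q (n + 1)).Nodup ∧ (stairList P Q (n + 1)).IsChain D.Adj ∧
      (∀ v ∈ stairList P Q (n + 1), v ∉ F) ∧
      (∀ v ∈ stairList P Q (n + 1), v ∈ Set.range (R j) → v = R j s) ∧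
      (∀ v ∈ stairList P Q (n + 1), v ∈ Set.range (R (j + n + 1)) → v = R (j + n + 1) u) ∧
      ∀ v ∈ stairList P Q (n + 1), ∀ i, v ∈ Set.range (R i) → i ≤ j + n + 1 := by
  induction n with
  | zero =>
    obtain ⟨l, t, u, hd, hl, hlF⟩ := exists_edge_path hdisj (hedge j) hF
    have hl' : ∀ v ∈ l, ∀ i m, R i m ≠ v := fun v hv i m h =>
      hl v hv (Set.mem_iUnion.2 ⟨i, m, h⟩)
    refine ⟨fun _ => R j t :: (l ++ [R (j + 1) u]), fun _ => [], t, u, ?_, ?_, ?_⟩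
    · intro k hk
      obtain rfl : k = 0 := by omega
      refine ⟨⟨hd, ⟨_, ⟨t, rfl⟩, rfl⟩, ⟨_, ⟨u, rfl⟩, ?_⟩, ?_⟩, by omega⟩
      · rw [← List.cons_append, List.getLast?_append]
        simp
      · simpa [InternallyAvoids, Internals] using hl
    · rw [← List.cons_append, List.getLast?_append]
      simp
    · have hst : stairList (fun _ => R j t :: (l ++ [R (j + 1) u])) (fun _ => []) (0 + 1) =
          R j t :: (l ++ [R (j + 1) u]) := by simp [stairList]
      rw [hst]
      refine ⟨rfl, ?_, hd.2.1, hd.2.2, hlF, ?_, ?_, ?_⟩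
      · rw [← List.cons_append, List.getLast?_append]
        simp
      all_goals
        intro v hv
        simp only [List.mem_cons, List.mem_append, List.not_mem_nil, or_false] at hv
      · rintro ⟨m, rfl⟩
        rcases hv with hv | hv | hv
        · exact hv
        · exact absurd rfl (hl' _ hv _ _)
        · exact absurd hv (hdisj _ _ (by omega) _ _)
      · rintro ⟨m, rfl⟩
        rcases hv with hv | hv | hv
        · exact absurd hv (hdisj _ _ (by omega) _ _)
        · exact absurd rfl (hl' _ hv _ _)
        · exact hv
      · rintro i ⟨m, rfl⟩
        by_contra hi
        rcases hv with hv | hv | hv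
        · exact absurd hv (hdisj _ _ (by omega) _ _)
        · exact absurd rfl (hl' _ hv _ _)
        · exact absurd hv (hdisj _ _ (by omega) _ _)
  | succ n ih =>
    obtain ⟨P, Q, s, u, hPQ, hPlast, hhead, hlast, hnd, hch, hLF, hLj, hLn, hLi⟩ := ih
    have hinj : ∀ i, Function.Injective (R i) := fun i => (hray i).1
    obtain ⟨l, t, u', hd, hl, hlF⟩ := exists_edge_path hdisj (hedge (j + n + 1))
      (hF.union (finite_downCl R (stairList P Q (n + 1)).finite_toSet hinj hdisj))
    have hl' : ∀ v ∈ l, ∀ i m, R i m ≠ v := fun v hv i m h =>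
      hl v hv (Set.mem_iUnion.2 ⟨i, m, h⟩)
    have huL : R (j + n + 1) u ∈ stairList P Q (n + 1) := List.mem_of_getLast? hlast
    have hut : u < t := by
      by_contra h
      exact hlF (R (j + n + 1) t) (by simp) (Or.inr (Or.inr ⟨_, t, rfl, u, by omega, huL⟩))
    set p := R (j + n + 1) t :: (l ++ [R (j + n + 1 + 1) u']) with hp
    set q := raySegment (R (j + n + 1)) u (t - u + 1) with hq
    have hplast : p.getLast? = some (R (j + n + 1 + 1) u') := by
      rw [hp, ← List.cons_append, List.getLast?_append]
      simp
    have hqtail : q.tail = raySegment (R (j + n + 1)) (u + 1) (t - u) := by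
      rw [hq, raySegment_succ_left, List.tail_cons]
    set P' := Function.update P (n + 1) p
    set Q' := Function.update Q (n + 1) q
    have hP'k : ∀ k < n + 1, P' k = P k := fun k hk => Function.update_of_ne (by omega) _ _
    have hQ'k : ∀ k < n + 1, Q' k = Q k := fun k hk => Function.update_of_ne (by omega) _ _
    have hP'n : P' (n + 1) = p := Function.update_self ..
    have hQ'n : Q' (n + 1) = q := Function.update_self ..
    have hst : stairList P' Q' (n + 1 + 1) = stairList P Q (n + 1) ++
        raySegment (R (j + n + 1)) (u + 1) (t - u) ++ (l ++ [R (j + n + 1 + 1) u']) := by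
      rw [stairList_succ _ _ (by omega), stairList_congr hP'k hQ'k, hP'n, hQ'n, hqtail, hp,
        List.tail_cons, List.append_assoc]
    obtain ⟨hc1, hc2⟩ := chain_append_raySegment (hray (j + n + 1)) hch hlast (t - u)
    rw [Nat.add_sub_cancel' hut.le] at hc2
    obtain ⟨hc3, hc4⟩ := chain_append_of_cons hc1 hc2 hd.2.2
    refine ⟨P', Q', s, u', ?_, ?_, ?_⟩
    · intro k hk
      rcases Nat.lt_succ_iff_lt_or_eq.1 hk with hk | rfl
      · rw [hP'k k hk, hQ'k k hk, hP'k (k - 1) (by omega)]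
        exact hPQ k hk
      · rw [hP'n, hQ'n, hP'k (n + 1 - 1) (by omega)]
        refine ⟨⟨hd, ⟨_, ⟨t, rfl⟩, rfl⟩, ⟨_, ⟨u', rfl⟩, hplast⟩, ?_⟩, fun _ => ⟨?_, ?_, ?_⟩⟩
        · simpa [InternallyAvoids, Internals, hp] using hl
        · exact ⟨u, t, hut, rfl⟩
        · rw [Nat.add_sub_cancel, hPlast, hq, raySegment_succ_left, List.head?_cons]
        · rw [hq, raySegment_succ_right, List.getLast?_append, Nat.add_sub_cancel' hut.le]
          simp [hp]
    · rw [hP'n]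
      exact hplast
    · rw [hst]
      have hmem : ∀ v, v ∈ stairList P Q (n + 1) ++
          raySegment (R (j + n + 1)) (u + 1) (t - u) ++ (l ++ [R (j + n + 1 + 1) u']) ↔
          v ∈ stairList P Q (n + 1) ∨ (∃ m, u < m ∧ m ≤ t ∧ R (j + n + 1) m = v) ∨
          v ∈ l ∨ v = R (j + n + 1 + 1) u' := by
        intro v
        simp only [List.mem_append, mem_raySegment, List.mem_cons, List.not_mem_nil, or_false,
          or_assoc]
        have : ∀ m, m < u + 1 + (t - u) ↔ m ≤ t := fun m => by omega
        simp only [this, Nat.succ_le_iff]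
      refine ⟨?_, hc4.trans hplast, ?_, hc3, ?_, ?_, ?_, ?_⟩
      · rw [List.append_assoc, List.head?_append, hhead, Option.some_or]
      · rw [List.nodup_append, List.nodup_append]
        refine ⟨⟨hnd, nodup_raySegment (hinj _) _ _, ?_⟩, (List.nodup_cons.1 hd.2.1).2, ?_⟩
        · rintro a ha b hb rfl
          obtain ⟨m, hm1, -, rfl⟩ := mem_raySegment.1 hb
          have := hinj _ (hLn _ ha ⟨m, rfl⟩)
          omega
        · rintro a ha b hb rfl
          rcases List.mem_append.1 ha with ha | ha
          · exact hlF a (List.mem_cons_of_mem _ hb) (Or.inr (Or.inl ha))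
          · obtain ⟨m, hm1, -, rfl⟩ := mem_raySegment.1 ha
            rcases List.mem_append.1 hb with hb | hb
            · exact hl' _ hb _ _ rfl
            · exact hdisj _ _ (by omega) _ _ (List.mem_singleton.1 hb)
      all_goals
        intro v hv
        have hv' := (hmem v).1 hv
      · rcases hv' with hv | ⟨m, hm, -, rfl⟩ | hv | rfl
        · exact hLF v hv
        · exact fun h => hLF _ huL (hdc _ _ _ hm.le h)
        · exact fun h => hlF v (by simp [hp, hv]) (Or.inl h)
        · exact fun h => hlF _ (by simp [hp]) (Or.inl h)
      · rintro ⟨i, rfl⟩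
        rcases hv' with hv | ⟨m, -, -, hv⟩ | hv | hv
        · exact hLj _ hv ⟨i, rfl⟩
        · exact absurd hv (hdisj _ _ (by omega) _ _)
        · exact absurd rfl (hl' _ hv _ _)
        · exact absurd hv (hdisj _ _ (by omega) _ _)
      · rintro ⟨i, rfl⟩
        rcases hv' with hv | ⟨m, -, -, hv⟩ | hv | hv
        · have := hLi _ hv _ ⟨i, rfl⟩
          omega
        · exact absurd hv (hdisj _ _ (by omega) _ _)
        · exact absurd rfl (hl' _ hv _ _)
        · exact hv
      · rintro i ⟨m', rfl⟩
        by_contra hi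
        rcases hv' with hv | ⟨m, -, -, hv⟩ | hv | hv
        · have := hLi _ hv _ ⟨m', rfl⟩
          omega
        · exact absurd hv (hdisj _ _ (by omega) _ _)
        · exact absurd rfl (hl' _ hv _ _)
        · exact absurd hv (hdisj _ _ (by omega) _ _)

theorem exists_forall_ge_disjoint_ray {R : ℕ → ℕ → V}
    (hdisj : ∀ i j, i ≠ j → ∀ n m, R i n ≠ R j m) (l : List V) :
    ∃ N, ∀ i, N ≤ i → ∀ v ∈ l, v ∉ Set.range (R i) := by
  induction l with
  | nil => exact ⟨0, by simp⟩
  | cons v l ih =>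
    obtain ⟨N, hN⟩ := ih
    by_cases hv : ∃ i m, R i m = v
    · obtain ⟨i₀, m₀, rfl⟩ := hv
      refine ⟨max N (i₀ + 1), fun i hi v hv => ?_⟩
      rcases List.mem_cons.1 hv with rfl | hv
      · rintro ⟨m, hm⟩
        exact hdisj i i₀ (by omega) _ _ hm
      · exact hN i (by omega) v hv
    · refine ⟨N, fun i hi w hw => ?_⟩
      rcases List.mem_cons.1 hw with rfl | hw
      · rintro ⟨m, hm⟩
        exact hv ⟨i, m, hm⟩
      · exact hN i hi w hw

/-- A path whose last edge is an edge of `R a`, and whose other vertices avoid `R a`. -/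
def EndsWithFirstEdge (D : Digraph V) (R : ℕ → ℕ → V) (s : List V × ℕ) : Prop :=
  s.1.Nodup ∧ s.1.IsChain D.Adj ∧
    ∃ l m, s.1 = l ++ [R s.2 m, R s.2 (m + 1)] ∧ ∀ v ∈ l, v ∉ Set.range (R s.2)

/-- The path `s'.1` extends `s.1`, outside the downward closure of `s.1` without its end, such
that the extension ends with a staircase from `R j` to `R s'.2` and one more vertex. -/
def StairExtends (D : Digraph V) (R : ℕ → ℕ → V) (j : ℕ) (s s' : List V × ℕ) : Prop :=
  s.2 < s'.2 ∧
    (∃ A St y, s'.1 = A ++ St ++ [y] ∧ s.1.length ≤ A.length ∧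
      IsStaircase D R (n := s'.2 - j) (fun k => j + k.val) St) ∧
    ∃ M, s'.1 = s.1 ++ M ∧ ∀ v ∈ M, v ∉ DownCl R {v | v ∈ s.1.dropLast}

theorem exists_ge_of_mem_downCl {R : ℕ → ℕ → V} (hinj : ∀ i, Function.Injective (R i))
    (hdisj : ∀ i j, i ≠ j → ∀ n m, R i n ≠ R j m) {X : Set V} {a m : ℕ}
    (h : R a m ∈ DownCl R X) : ∃ m', m ≤ m' ∧ R a m' ∈ X := by
  rcases h with h | ⟨i, k, hk, m', hm, hm'⟩
  · exact ⟨m, le_rfl, h⟩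
  · by_cases hi : a = i
    · subst hi
      exact ⟨m', hinj a hk ▸ hm, hm'⟩
    · exact absurd hk (hdisj _ _ hi _ _)

theorem EndsWithFirstEdge.exists_stairExtends {D : Digraph V} {R : ℕ → ℕ → V}
    (hray : ∀ i, IsOutRay D (R i)) (hdisj : ∀ i j, i ≠ j → ∀ n m, R i n ≠ R j m)
    (hequiv : ∀ i j, i ≠ j → EquivRays D (R i) (R j))
    (hedge : ∀ i, ManyDisjointPathsAvoiding D (Set.range (R i))
      (Set.range (R (i + 1))) (RaysUnion R)) (j : ℕ) {s : List V × ℕ}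
    (hs : EndsWithFirstEdge D R s) :
    ∃ s', EndsWithFirstEdge D R s' ∧ StairExtends D R j s s' := by
  obtain ⟨L, a⟩ := s
  obtain ⟨hnd, hch, l, m, hL, hl⟩ := hs
  simp only at hnd hch hL hl
  have hinj : ∀ i, Function.Injective (R i) := fun i => (hray i).1
  have hdrop : L.dropLast = l ++ [R a m] := by simp [hL]
  have hLlast : L.getLast? = some (R a (m + 1)) := by simp [hL]
  have hLmem : ∀ v, v ∈ L ↔ v ∈ L.dropLast ∨ v = R a (m + 1) := by
    intro v
    simp [hL]
    tauto
  set F := DownCl R {v | v ∈ L.dropLast}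
  have hFfin : F.Finite := finite_downCl R L.dropLast.finite_toSet hinj hdisj
  have hFdc : DownClosed R F := downClosed_downCl R _ hinj hdisj
  have hyF : R a (m + 1) ∉ F := by
    intro h
    obtain ⟨m', hm, hm'⟩ := exists_ge_of_mem_downCl hinj hdisj h
    have hm' : R a m' ∈ L.dropLast := hm'
    rw [hdrop, List.mem_append, List.mem_singleton] at hm'
    rcases hm' with h | h
    · exact hl _ h ⟨m', rfl⟩
    · have := hinj a h
      omega
  obtain ⟨T, z, hTnd, hTch, hTF, hTlast, hTj⟩ :=
    exists_dipath_to_ray hray hequiv j hFfin hFdc hyF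
  obtain ⟨N, hN⟩ := exists_forall_ge_disjoint_ray hdisj (L ++ T)
  set n := max N a
  have hLTa : ∀ v ∈ L ++ T, v ∉ Set.range (R (j + n + 1)) := hN _ (by omega)
  have hF2fin : (DownCl R {v | v ∈ L ++ T}).Finite :=
    finite_downCl R (L ++ T).finite_toSet hinj hdisj
  obtain ⟨P, Q, t, u, hPQ, -, hhead, hlast, hSnd, hSch, hSF, hSj, hSn, -⟩ :=
    exists_stairPieces hray hdisj hedge hF2fin (downClosed_downCl R _ hinj hdisj) j n
  have hzLT : R j z ∈ L ++ T := by
    rcases List.mem_cons.1 (List.mem_of_getLast? hTlast) with h | h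
    · exact h ▸ List.mem_append_left _ ((hLmem _).2 (Or.inr rfl))
    · exact List.mem_append_right _ h
  set St := stairList P Q (n + 1)
  have htS : R j t ∈ St := List.mem_of_head? hhead
  have huS : R (j + n + 1) u ∈ St := List.mem_of_getLast? hlast
  have hzt : z < t := by
    by_contra h
    exact hSF _ htS (Or.inr ⟨j, t, rfl, z, by omega, hzLT⟩)
  have hstair : IsStaircase D R (n := n + 1) (fun k => j + k.val) St :=
    hPQ.isStaircase ⟨List.ne_nil_of_mem htS, hSnd, hSch⟩
  set mid := raySegment (R j) (z + 1) (t - z - 1)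
  have hmidmem : ∀ v ∈ mid, ∃ k, z < k ∧ k < t ∧ R j k = v := by
    intro v hv
    obtain ⟨k, h1, h2, h3⟩ := mem_raySegment.1 hv
    exact ⟨k, by omega, by omega, h3⟩
  have hy'S : R (j + n + 1) (u + 1) ∉ St := fun h => by
    have := hinj _ (hSn _ h ⟨_, rfl⟩)
    omega
  obtain ⟨hc1, hc2⟩ := chain_append_of_cons hch hLlast hTch
  obtain ⟨hc3, hc4⟩ := chain_append_raySegment (hray j) hc1 (hc2.trans hTlast) (t - z - 1)
  have hc5 : (L ++ T ++ mid ++ St).IsChain D.Adj := by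
    refine List.isChain_append.2 ⟨hc3, hSch, fun x hx y hy => ?_⟩
    rw [hc4, Option.mem_some_iff] at hx
    rw [hhead, Option.mem_some_iff] at hy
    have hadj := (hray j).2 (z + (t - z - 1))
    rwa [show z + (t - z - 1) + 1 = t by omega, hx, hy] at hadj
  have hTL : ∀ v ∈ L, v ∉ T := by
    intro v hv hvT
    rcases (hLmem v).1 hv with h | rfl
    · exact hTF v (List.mem_cons_of_mem _ hvT) (Or.inl h)
    · exact (List.nodup_cons.1 hTnd).1 hvT
  have hmidF : ∀ v ∈ mid, v ∉ F := by
    intro v hv h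
    obtain ⟨k, h1, -, rfl⟩ := hmidmem v hv
    exact hTF _ (List.mem_of_getLast? hTlast) (hFdc _ _ _ h1.le h)
  have hmidLT : ∀ v ∈ L ++ T, v ∉ mid := by
    intro v hv hvm
    have hvT : v ∉ R a (m + 1) :: T := by
      intro h
      obtain ⟨k, h1, -, rfl⟩ := hmidmem v hvm
      have := hinj _ (hTj _ h ⟨k, rfl⟩)
      omega
    simp only [List.mem_cons, not_or] at hvT
    rcases List.mem_append.1 hv with h | h
    · rcases (hLmem v).1 h with h | h
      · exact hmidF v hvm (Or.inl h)
      · exact hvT.1 h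
    · exact hvT.2 h
  have hSLT : ∀ v ∈ L ++ T, v ∉ St := fun v hv hvS => hSF v hvS (Or.inl hv)
  have hSmid : ∀ v ∈ mid, v ∉ St := by
    intro v hv hvS
    obtain ⟨k, -, h1, rfl⟩ := hmidmem v hv
    have := hinj _ (hSj _ hvS ⟨k, rfl⟩)
    omega
  have hmida : ∀ v ∈ mid, v ∉ Set.range (R (j + n + 1)) := by
    rintro v hv ⟨k', hk'⟩
    obtain ⟨k, -, -, rfl⟩ := hmidmem v hv
    exact hdisj _ _ (by omega) _ _ hk'
  have hnd5 : (L ++ T ++ mid ++ St).Nodup := by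
    simp only [List.nodup_append']
    refine ⟨⟨⟨hnd, (List.nodup_cons.1 hTnd).2, hTL⟩, nodup_raySegment (hinj j) _ _,
      hmidLT⟩, hSnd, fun v hv => ?_⟩
    rcases List.mem_append.1 hv with h | h
    exacts [hSLT v h, hSmid v h]
  obtain ⟨S₀, hS₀⟩ := List.getLast?_eq_some_iff.1 hlast
  refine ⟨(L ++ T ++ mid ++ St ++ [R (j + n + 1) (u + 1)], j + n + 1), ⟨?_, ?_, ?_⟩, ?_, ?_, ?_⟩
  · rw [List.nodup_append']
    refine ⟨hnd5, by simp, fun v hv hv' => ?_⟩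
    rw [List.mem_singleton.1 hv'] at hv
    rcases List.mem_append.1 hv with h | h
    · rcases List.mem_append.1 h with h | h
      exacts [hLTa _ h ⟨_, rfl⟩, hmida _ h ⟨_, rfl⟩]
    · exact hy'S h
  · refine List.isChain_append.2 ⟨hc5, by simp, fun x hx y hy => ?_⟩
    rw [List.getLast?_append, hlast, Option.some_or, Option.mem_some_iff] at hx
    rw [List.head?_cons, Option.mem_some_iff] at hy
    rw [← hx, ← hy]
    exact (hray _).2 _
  · refine ⟨L ++ T ++ mid ++ S₀, u, by simp [hS₀], fun v hv => ?_⟩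
    rcases List.mem_append.1 hv with h | h
    · rcases List.mem_append.1 h with h | h
      exacts [hLTa _ h, hmida _ h]
    · intro hva
      have hvu := hSn v (hS₀ ▸ List.mem_append_left _ h) hva
      rw [hS₀, List.nodup_append'] at hSnd
      exact hSnd.2.2 h (by simp [hvu])
  · change a < j + n + 1
    omega
  · refine ⟨L ++ T ++ mid, St, _, rfl, by simp, ?_⟩
    have : ∀ k, k = n + 1 → IsStaircase D R (n := k) (fun k => j + k.val) St := by
      rintro _ rfl
      exact hstair
    exact this _ (by simp only; omega)
  · refine ⟨T ++ mid ++ St ++ [R (j + n + 1) (u + 1)], by simp, fun v hv => ?_⟩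
    have hsub : F ⊆ DownCl R {v | v ∈ L ++ T} :=
      downCl_mono R fun v hv => List.mem_append_left _ (List.mem_of_mem_dropLast hv)
    simp only [List.mem_append, List.mem_singleton] at hv
    rcases hv with ((h | h) | h) | rfl
    · exact hTF v (List.mem_cons_of_mem _ h)
    · exact hmidF v h
    · exact fun hvF => hSF v h (hsub hvF)
    · intro h
      obtain ⟨m', -, hm'⟩ := exists_ge_of_mem_downCl hinj hdisj (hsub h)
      exact hLTa _ hm' ⟨m', rfl⟩

theorem exists_limit_of_prefix [Nonempty V] {L : ℕ → List V} (hpre : ∀ n, L n <+: L (n + 1))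
    (hlen : ∀ n, n < (L n).length) : ∃ S : ℕ → V, ∀ n, L n = raySegment S 0 (L n).length := by
  have hmono : ∀ {m n}, m ≤ n → L m <+: L n := fun {m n} h => by
    induction h with
    | refl => exact List.prefix_refl _
    | step _ ih => exact ih.trans (hpre _)
  refine ⟨fun k => (L k)[k]'(hlen k), fun n => ?_⟩
  refine List.ext_getElem (by simp [raySegment]) fun k hk hk' => ?_
  simp only [raySegment, List.getElem_map, List.getElem_range, Nat.zero_add]
  rcases le_total k n with h | h
  · exact ((hmono h).getElem (hlen k)).symm
  · exact (hmono h).getElem hk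

/-- Claim 4.3: given an infinite family of disjoint equivalent out-rays forming an
out-ray in `D^∞`, there are an out-ray `S`, indices `α` and edge positions `p` along `S`
with `S (p n) S (p n + 1)` an edge of `R (α n)`, such that for each `n`: a terminal
segment of `S` between the `n`-th and `(n+1)`-st chosen edge is a staircase through
`R (α 0), R (α 0 + 1), …, R (α (n+1))`; the tail of `S` after the `(n+1)`-st edge avoids
the downward closure of the initial segment of `S`; and `S (p (n+1))` is the first vertex
of `S` on `R (α (n+1))`. -/
theorem stmt12 (D : Digraph V) (R : ℕ → ℕ → V)
    (hray : ∀ i, IsOutRay D (R i))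
    (hdisj : ∀ i j, i ≠ j → ∀ n m, R i n ≠ R j m)
    (hequiv : ∀ i j, i ≠ j → EquivRays D (R i) (R j))
    (hedge : ∀ i, ManyDisjointPathsAvoiding D (Set.range (R i))
      (Set.range (R (i + 1))) (RaysUnion R)) :
    ∃ S : ℕ → V, IsOutRay D S ∧ ∃ α p : ℕ → ℕ, StrictMono α ∧ StrictMono p ∧
      (∀ n, ∃ m, R (α n) m = S (p n) ∧ R (α n) (m + 1) = S (p n + 1)) ∧
      ∀ n : ℕ,
        (∃ q, p n + 1 ≤ q ∧ q ≤ p (n + 1) ∧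
          IsStaircase D R (n := α (n + 1) - α 0) (fun k => α 0 + k.val)
            ((List.range (p (n + 1) - q + 1)).map fun m => S (q + m))) ∧
        (∀ k, p (n + 1) + 1 ≤ k → S k ∉ DownCl R {v | ∃ t ≤ p (n + 1), S t = v}) ∧
        (∀ t, t < p (n + 1) → S t ∉ Set.range (R (α (n + 1)))) := by
  have hinj : ∀ i, Function.Injective (R i) := fun i => (hray i).1
  have : Nonempty V := ⟨R 0 0⟩
  have hinit : EndsWithFirstEdge D R ([R 0 0, R 0 1], 0) := by
    refine ⟨?_, ?_, [], 0, rfl, by simp⟩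
    · simpa using (hinj 0).ne zero_ne_one
    · simpa using (hray 0).2 0
  choose! next hnext hext using fun (s : List V × ℕ) (hs : EndsWithFirstEdge D R s) =>
    hs.exists_stairExtends hray hdisj hequiv hedge 0
  let st : ℕ → List V × ℕ := fun n => next^[n] ([R 0 0, R 0 1], 0)
  have hst : ∀ n, EndsWithFirstEdge D R (st n) ∧ StairExtends D R 0 (st n) (st (n + 1)) := by
    have hend : ∀ n, EndsWithFirstEdge D R (st n) := fun n => by
      induction n with
      | zero => exact hinit
      | succ n ih =>
        simp only [st, Function.iterate_succ_apply'] at ih ⊢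
        exact hnext _ ih
    refine fun n => ⟨hend n, ?_⟩
    have := hext _ (hend n)
    simpa only [st, Function.iterate_succ_apply'] using this
  have hst0 : st 0 = ([R 0 0, R 0 1], 0) := rfl
  generalize st = st at hst hst0
  have hpre : ∀ n, (st n).1 <+: (st (n + 1)).1 := fun n => by
    obtain ⟨M, hM, -⟩ := (hst n).2.2.2
    exact ⟨M, hM.symm⟩
  have hlt : StrictMono fun n => (st n).1.length := strictMono_nat_of_lt_succ fun n => by
    obtain ⟨A, St, y, h, hA, -⟩ := (hst n).2.2.1
    simp only [h, List.length_append, List.length_singleton]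
    omega
  have hlen : ∀ n, n + 2 ≤ (st n).1.length := fun n => by
    induction n with
    | zero => simp [hst0]
    | succ n ih => have := hlt (Nat.lt_add_one n); simp only at this; omega
  obtain ⟨S, hS⟩ := exists_limit_of_prefix (L := fun n => (st n).1) hpre
    fun n => by have := hlen n; omega
  have hget : ∀ n k (hk : k < (st n).1.length), (st n).1[k] = S k := fun n k hk => by
    rw [List.getElem_of_eq (hS n)]
    simp [raySegment]
  have hSinj : Function.Injective S := by
    intro k k' h
    have h1 := hlen (max k k')
    have hnd := (hst (max k k')).1.1
    rw [← hget (max k k') k (by omega), ← hget (max k k') k' (by omega)] at h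
    exact hnd.getElem_inj_iff.1 h
  have hSray : IsOutRay D S := by
    refine ⟨hSinj, fun k => ?_⟩
    have h1 := hlen k
    have := List.isChain_iff_getElem.1 (hst k).1.2.1 k (by omega)
    rwa [hget, hget] at this
  have hend : ∀ n, ∃ m, R (st n).2 m = S ((st n).1.length - 2) ∧
      R (st n).2 (m + 1) = S ((st n).1.length - 2 + 1) ∧
      ∀ t < (st n).1.length - 2, S t ∉ Set.range (R (st n).2) := by
    intro n
    obtain ⟨-, -, l, m, hl, hlR⟩ := (hst n).1
    have hll : (st n).1.length = l.length + 2 := by simp [hl]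
    refine ⟨m, ?_, ?_, fun t ht => ?_⟩
    · rw [← hget n _ (by omega), List.getElem_of_eq hl]
      simp [hll]
    · rw [← hget n _ (by omega), List.getElem_of_eq hl]
      simp [hll]
    · rw [← hget n _ (by omega), List.getElem_of_eq hl, List.getElem_append_left (by omega)]
      exact hlR _ (List.getElem_mem _)
  have hdropmem : ∀ n v, v ∈ (st n).1.dropLast ↔ ∃ t ≤ (st n).1.length - 2, S t = v := by
    intro n v
    have h1 := hlen n
    rw [List.mem_iff_getElem]
    constructor
    · rintro ⟨t, ht, rfl⟩
      rw [List.length_dropLast] at ht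
      refine ⟨t, by omega, ?_⟩
      rw [List.getElem_dropLast, hget]
    · rintro ⟨t, ht, rfl⟩
      refine ⟨t, by rw [List.length_dropLast]; omega, ?_⟩
      rw [List.getElem_dropLast, hget]
  refine ⟨S, hSray, fun n => (st n).2, fun n => (st n).1.length - 2,
    strictMono_nat_of_lt_succ fun n => (hst n).2.1, fun m n hmn => ?_, fun n => ?_, fun n =>
    ⟨?_, fun k hk => ?_, ?_⟩⟩
  · have h1 := hlt hmn
    have h2 := hlen m
    simp only at h1 ⊢
    omega
  · obtain ⟨m, h1, h2, -⟩ := hend n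
    exact ⟨m, h1, h2⟩
  · obtain ⟨A, St, y, h, hA, hstair⟩ := (hst n).2.2.1
    have hSt : 0 < St.length := by
      obtain ⟨P, Q, -, -, -, -, hd⟩ := hstair
      exact List.length_pos_iff.2 hd.1
    have h1 := hlen n
    have hl : (st (n + 1)).1.length = A.length + St.length + 1 := by
      simp [h, Nat.add_assoc]
    refine ⟨A.length, by beta_reduce; omega, by beta_reduce; omega, ?_⟩
    beta_reduce
    have hlist : (List.range ((st (n + 1)).1.length - 2 - A.length + 1)).map
        (fun m => S (A.length + m)) = St := by
      refine List.ext_getElem (by simp; omega) fun k hk hk' => ?_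
      simp only [List.getElem_map, List.getElem_range]
      rw [← hget (n + 1) _ (by omega), List.getElem_of_eq h,
        List.getElem_append_left (by simp; omega), List.getElem_append_right (by omega)]
      simp
    rw [hlist, hst0]
    exact hstair
  · have hset : ∀ i, {v | v ∈ (st i).1.dropLast} =
        {v | ∃ t ≤ (st i).1.length - 2, S t = v} := fun i => by
      ext v
      exact hdropmem i v
    have h1 := hlen (n + 1)
    beta_reduce at hk ⊢
    rcases Nat.eq_or_lt_of_le hk with rfl | hk
    · obtain ⟨m, hm1, hm2, hm3⟩ := hend (n + 1)
      intro h
      rw [← hm2] at h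
      obtain ⟨m', hm', t, ht, hSt⟩ := exists_ge_of_mem_downCl hinj hdisj h
      rcases Nat.eq_or_lt_of_le ht with rfl | ht
      · rw [← hm1] at hSt
        have := hinj _ hSt
        omega
      · exact hm3 t ht ⟨m', hSt.symm⟩
    · have hex : ∃ i, k < (st i).1.length := ⟨k, by have := hlen k; omega⟩
      classical
      obtain ⟨i, hi, hmin⟩ : ∃ i, k < (st (i + 1)).1.length ∧ (st i).1.length ≤ k := by
        have h2 := Nat.find_spec hex
        have hpos : n + 1 < Nat.find hex := by
          by_contra hle
          have := hlt.monotone (not_lt.1 hle)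
          omega
        refine ⟨Nat.find hex - 1, ?_, ?_⟩
        · rwa [Nat.sub_add_cancel (by omega)]
        · exact not_lt.1 (Nat.find_min hex (by omega))
      have hni : n + 1 ≤ i := by
        by_contra hle
        have := hlt.monotone (show i + 1 ≤ n + 1 by omega)
        omega
      obtain ⟨M, hM, hMF⟩ := (hst i).2.2.2
      have hkM : S k ∈ M := by
        rw [← hget (i + 1) k hi, List.getElem_of_eq hM, List.getElem_append_right hmin]
        exact List.getElem_mem _
      refine fun h => hMF _ hkM (downCl_mono R ?_ h)
      rw [hset i]
      rintro v ⟨t, ht, rfl⟩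
      have := hlt.monotone hni
      exact ⟨t, by omega, rfl⟩
  · obtain ⟨m, -, -, h⟩ := hend (n + 1)
    exact h
end

section
/- There exists a dominated directed necklace grid (with vertical necklaces isomorphic to bidirected rays and arches being single edges) that contains no bidirected necklace grid as a subgraph. -/
variable {V : Type*}

/-- Reachability by a directed path with all vertices in `s`. -/
def ReachOn (D : Digraph V) (s : Set V) : V → V → Prop :=
  Relation.ReflTransGen (fun a b => a ∈ s ∧ b ∈ s ∧ D.Adj a b)

def StrongOn (D : Digraph V) (s : Set V) : Prop :=
  ∀ u ∈ s, ∀ v ∈ s, ReachOn D s u v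

/-- `H` witnesses that `N` is a necklace. -/
def IsNecklaceWitness (D : Digraph V) (N : Set V) (H : ℕ → Set V) : Prop :=
  (∀ n, (H n).Finite ∧ (H n).Nonempty ∧ StrongOn D (H n)) ∧
  N = ⋃ n, H n ∧
  ∀ i j : ℕ, (H i ∩ H j).Nonempty ↔ (i ≤ j + 1 ∧ j ≤ i + 1)

/-- The edges of `D` leaving or entering `N` with their `N`-endpoint in `K`. -/
def CrossEdgesAt (D : Digraph V) (N K : Set V) : Set (V × V) :=
  {e | D.Adj e.1 e.2 ∧ ((e.1 ∈ K ∧ e.2 ∉ N) ∨ (e.2 ∈ K ∧ e.1 ∉ N))}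

/-- Attachment restrictions for a vertical necklace in a necklace grid: at most one edge
leaves or enters the necklace in `H ℓ` for odd `ℓ`, no such edge meets
`H ℓ \ (H (ℓ-1) ∪ H (ℓ+1))` for even `ℓ`. -/
def NecklaceAttachOK (D : Digraph V) (N : Set V) (H : ℕ → Set V) : Prop :=
  (∀ l, Odd l → (CrossEdgesAt D N (H l)).Subsingleton) ∧
  (∀ l, Even l → CrossEdgesAt D N (H l \ (H (l - 1) ∪ H (l + 1))) = ∅)

/-- `u v` is an edge of the path `L`. -/
def ConsecIn (L : List V) (u v : V) : Prop := ∃ l₁ l₂, L = l₁ ++ u :: v :: l₂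

def NeckUnion (neck : ℕ → Set V) : Set V := ⋃ i, neck i

/-- `L` meets all necklaces `0, …, n`, meets no other necklace, and meets them in
increasing order. -/
def VisitsUp (neck : ℕ → Set V) (n : ℕ) (L : List V) : Prop :=
  (∀ j ≤ n, ∃ v ∈ L, v ∈ neck j) ∧
  (∀ v ∈ L, ∀ j, v ∈ neck j → j ≤ n) ∧
  ∀ s t, ∀ hs : s < L.length, ∀ ht : t < L.length, s < t → ∀ j j',
    L.get ⟨s, hs⟩ ∈ neck j → L.get ⟨t, ht⟩ ∈ neck j' → j ≤ j'

/-- `L` meets all necklaces `0, …, n`, meets no other necklace, and meets them in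
decreasing order. -/
def VisitsDown (neck : ℕ → Set V) (n : ℕ) (L : List V) : Prop :=
  (∀ j ≤ n, ∃ v ∈ L, v ∈ neck j) ∧
  (∀ v ∈ L, ∀ j, v ∈ neck j → j ≤ n) ∧
  ∀ s t, ∀ hs : s < L.length, ∀ ht : t < L.length, s < t → ∀ j j',
    L.get ⟨s, hs⟩ ∈ neck j → L.get ⟨t, ht⟩ ∈ neck j' → j' ≤ j

/-- Common part of the definition of a (subdivision of a) necklace grid: disjoint
vertical necklaces with attachment restrictions, pairwise disjoint girders occurring at
increasing heights on the necklaces, and every edge lying in a necklace or a girder. -/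
structure IsNecklaceGridBase (G : Digraph V) (neck : ℕ → Set V)
    (H : ℕ → ℕ → Set V) (Gird : ℕ → List V) : Prop where
  disj : ∀ i j, i ≠ j → Disjoint (neck i) (neck j)
  neckwit : ∀ i, IsNecklaceWitness G (neck i) (H i)
  attach : ∀ i, NecklaceAttachOK G (neck i) (H i)
  gpath : ∀ n, 1 ≤ n → IsDipath G (Gird n)
  gdisj : ∀ m n, 1 ≤ m → 1 ≤ n → m ≠ n → ListsDisjoint (Gird m) (Gird n)
  gheight : ∀ m n, 1 ≤ m → m < n → ∀ i l l',
    (∃ v ∈ Gird m, v ∈ H i l) → (∃ v ∈ Gird n, v ∈ H i l') → l < l'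
  edges : ∀ u v, G.Adj u v →
    (∃ i, u ∈ neck i ∧ v ∈ neck i) ∨ ∃ n, 1 ≤ n ∧ ConsecIn (Gird n) u v

/-- A bidirected necklace grid: each girder is an upward staircase from necklace `0` to
necklace `n` followed by a downward staircase back to necklace `0`. -/
def IsBidirNecklaceGrid (G : Digraph V) (neck : ℕ → Set V)
    (H : ℕ → ℕ → Set V) (Gird : ℕ → List V) : Prop :=
  IsNecklaceGridBase G neck H Gird ∧ ∀ n, 1 ≤ n → ∃ U W : List V,
    Gird n = U ++ W ∧ U ≠ [] ∧ W ≠ [] ∧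
    StartsIn U (neck 0) ∧ EndsIn U (neck n) ∧ VisitsUp neck n U ∧
    StartsIn W (neck n) ∧ EndsIn W (neck 0) ∧ VisitsDown neck n W

/-- An outward-oriented dominated directed necklace grid: each girder is an upward
staircase from necklace `0` to necklace `n` followed by an arch back to necklace `0`
internally avoiding all necklaces. -/
def IsDomDirNecklaceGridOut (G : Digraph V) (neck : ℕ → Set V)
    (H : ℕ → ℕ → Set V) (Gird : ℕ → List V) : Prop :=
  IsNecklaceGridBase G neck H Gird ∧ ∀ n, 1 ≤ n → ∃ U W : List V,
    Gird n = U ++ W ∧ U ≠ [] ∧ W ≠ [] ∧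
    StartsIn U (neck 0) ∧ EndsIn U (neck n) ∧ VisitsUp neck n U ∧
    StartsIn W (neck n) ∧ EndsIn W (neck 0) ∧ InternallyAvoids W (NeckUnion neck)

/-- An inward-oriented dominated directed necklace grid: each girder is an arch from
necklace `0` to necklace `n` followed by a downward staircase back to necklace `0`. -/
def IsDomDirNecklaceGridIn (G : Digraph V) (neck : ℕ → Set V)
    (H : ℕ → ℕ → Set V) (Gird : ℕ → List V) : Prop :=
  IsNecklaceGridBase G neck H Gird ∧ ∀ n, 1 ≤ n → ∃ W U : List V,
    Gird n = W ++ U ∧ W ≠ [] ∧ U ≠ [] ∧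
    StartsIn W (neck 0) ∧ EndsIn W (neck n) ∧ InternallyAvoids W (NeckUnion neck) ∧
    StartsIn U (neck n) ∧ EndsIn U (neck 0) ∧ VisitsDown neck n U

/-- The vertical necklaces are bidirected rays `𝒟(S)`. -/
def NecksAreBidirRays (G : Digraph V) (neck : ℕ → Set V) (r : ℕ → ℕ → V) : Prop :=
  ∀ i, Function.Injective (r i) ∧ neck i = Set.range (r i) ∧
    ∀ n, G.Adj (r i n) (r i (n + 1)) ∧ G.Adj (r i (n + 1)) (r i n)

/-- The arches are single edges, `archE n` being the arch of the `n`-th girder. -/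
def ArchesAreEdges (neck : ℕ → Set V) (Gird : ℕ → List V) (archE : ℕ → V × V) : Prop :=
  ∀ n, 1 ≤ n → ∃ U, Gird n = U ++ [(archE n).1, (archE n).2] ∧
    (archE n).1 ∈ neck n ∧ (archE n).2 ∈ neck 0

/-! ### General facts about necklaces -/

namespace IsNecklaceWitness

variable {D : Digraph V} {N : Set V} {H : ℕ → Set V}

lemma subset (h : IsNecklaceWitness D N H) (l : ℕ) : H l ⊆ N :=
  h.2.1 ▸ Set.subset_iUnion H l

lemma reachOn (h : IsNecklaceWitness D N H) {u v : V} (hu : u ∈ N) (hv : v ∈ N) :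
    ReachOn D N u v := by
  have lift : ∀ l, ∀ a ∈ H l, ∀ b ∈ H l, ReachOn D N a b := fun l a ha b hb =>
    Relation.ReflTransGen.mono
      (fun _ _ hxy => ⟨h.subset l hxy.1, h.subset l hxy.2.1, hxy.2.2⟩) _ _ ((h.1 l).2.2 a ha b hb)
  have key : ∀ d i, ∀ a ∈ H i, ∀ b ∈ H (i + d), ReachOn D N a b ∧ ReachOn D N b a := by
    intro d
    induction d with
    | zero => exact fun i a ha b hb => ⟨lift i a ha b hb, lift i b hb a ha⟩
    | succ d ih =>
      intro i a ha b hb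
      obtain ⟨c, hc, hc'⟩ := (h.2.2 (i + d) (i + (d + 1))).2 ⟨by omega, by omega⟩
      obtain ⟨hac, hca⟩ := ih i a ha c hc
      exact ⟨hac.trans (lift _ c hc' b hb), (lift _ b hb c hc').trans hca⟩
  rw [h.2.1, Set.mem_iUnion] at hu hv
  obtain ⟨i, hi⟩ := hu
  obtain ⟨j, hj⟩ := hv
  rcases Nat.le_total i j with hij | hij <;> obtain ⟨d, rfl⟩ := Nat.exists_eq_add_of_le hij
  · exact (key d i u hi v hj).1
  · exact (key d j v hj u hi).2

lemma mono {D' : Digraph V} (h : IsNecklaceWitness D N H) (hD : ∀ u v, D.Adj u v → D'.Adj u v) :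
    IsNecklaceWitness D' N H :=
  ⟨fun n => ⟨(h.1 n).1, (h.1 n).2.1, fun u hu v hv => Relation.ReflTransGen.mono
    (fun _ _ hxy => ⟨hxy.1, hxy.2.1, hD _ _ hxy.2.2⟩) _ _ ((h.1 n).2.2 u hu v hv)⟩, h.2⟩

lemma shift (h : IsNecklaceWitness D N H) (L : ℕ) :
    IsNecklaceWitness D (⋃ l, H (L + l)) (fun l => H (L + l)) :=
  ⟨fun n => h.1 (L + n), rfl, fun i j => (h.2.2 (L + i) (L + j)).trans (by omega)⟩

lemma eventually_notMem (h : IsNecklaceWitness D N H) {F : Set V} (hF : F.Finite) :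
    ∃ L, ∀ l ≥ L, ∀ v ∈ F, v ∉ H l := by
  have : ∀ᶠ l in Filter.atTop, ∀ v ∈ F, v ∉ H l := by
    refine (Filter.eventually_all_finite hF).2 fun v _ => ?_
    by_cases hv : ∃ i, v ∈ H i
    · obtain ⟨i, hi⟩ := hv
      filter_upwards [Filter.eventually_gt_atTop (i + 1)] with l hl hvl
      have := ((h.2.2 l i).1 ⟨v, hvl, hi⟩).1
      omega
    · exact Filter.Eventually.of_forall fun l hl => hv ⟨l, hl⟩
  exact Filter.eventually_atTop.1 this

lemma infinite (h : IsNecklaceWitness D N H) : N.Infinite := fun hN => by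
  obtain ⟨L, hL⟩ := h.eventually_notMem hN
  obtain ⟨v, hv⟩ := (h.1 L).2.1
  exact hL L le_rfl v (h.subset L hv) hv

end IsNecklaceWitness

/-! ### The grid -/

/-- The `n`-th girder climbs from column `0` to column `n` using the heights `4 n + 2` and
`4 n + 3` and then jumps back to `(0, 4 n + 1)`. -/
def archGrid : Digraph (ℕ × ℕ) where
  Adj u v := (u.1 = v.1 ∧ (u.2 = v.2 + 1 ∨ v.2 = u.2 + 1)) ∨
    (∃ n, v.1 = u.1 + 1 ∧ v.1 ≤ n ∧ u.2 = 4 * n + 3 ∧ v.2 = 4 * n + 2) ∨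
    (∃ n, 1 ≤ n ∧ u.1 = n ∧ u.2 = 4 * n + 3 ∧ v.1 = 0 ∧ v.2 = 4 * n + 1)

def column (i : ℕ) : Set (ℕ × ℕ) := {v | v.1 = i}

def columnPiece (i l : ℕ) : Set (ℕ × ℕ) := {(i, l), (i, l + 1)}

def climb (n k : ℕ) : ℕ × ℕ := (k / 2, 4 * n + 2 + k % 2)

def girder (n : ℕ) : List (ℕ × ℕ) :=
  (List.range (2 * n + 2)).map (climb n) ++ [(0, 4 * n + 1)]

lemma mem_columnPiece {i l : ℕ} {v : ℕ × ℕ} :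
    v ∈ columnPiece i l ↔ v.1 = i ∧ (v.2 = l ∨ v.2 = l + 1) := by
  simp only [columnPiece, Set.mem_insert_iff, Set.mem_singleton_iff, Prod.ext_iff]
  omega

lemma girder_eq_append (n : ℕ) :
    girder n = (List.range (2 * n + 1)).map (climb n) ++ [(n, 4 * n + 3), (0, 4 * n + 1)] := by
  have : climb n (2 * n + 1) = (n, 4 * n + 3) := by
    simp only [climb, Prod.mk.injEq]; omega
  simp [girder, List.range_succ, this]

lemma height_of_mem_girder {n : ℕ} {v : ℕ × ℕ} (hv : v ∈ girder n) :
    4 * n + 1 ≤ v.2 ∧ v.2 ≤ 4 * n + 3 := by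
  simp only [girder, List.mem_append, List.mem_map, List.mem_range, List.mem_singleton] at hv
  rcases hv with ⟨k, -, rfl⟩ | rfl
  · simp only [climb]; omega
  · simp only; omega

lemma isDipath_girder {n : ℕ} (hn : 1 ≤ n) : IsDipath archGrid (girder n) := by
  refine ⟨by simp [girder], ?_, ?_⟩
  · rw [girder, List.nodup_append]
    refine ⟨List.nodup_range.map fun a b hab => ?_, by simp, ?_⟩
    · simp only [climb, Prod.mk.injEq] at hab; omega
    · intro a ha b hb
      simp only [List.mem_map, List.mem_range, List.mem_singleton] at ha hb
      obtain ⟨k, -, rfl⟩ := ha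
      subst hb
      simp only [climb, ne_eq, Prod.mk.injEq]; omega
  · refine List.isChain_iff_getElem.2 fun k hk => ?_
    simp only [girder, List.length_append, List.length_map, List.length_range,
      List.length_singleton] at hk
    simp only [girder, List.getElem_append, List.length_map, List.length_range,
      List.getElem_map, List.getElem_range, List.getElem_singleton]
    rw [dif_pos (by omega)]
    split_ifs with hk'
    · simp only [archGrid, climb]
      rcases Nat.mod_two_eq_zero_or_one k with h | h
      · left; omega
      · right; left; exact ⟨n, by omega⟩
    · simp only [archGrid, climb]
      exact Or.inr (Or.inr ⟨n, hn, by omega, by omega, trivial, rfl⟩)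

lemma strongOn_columnPiece (i l : ℕ) : StrongOn archGrid (columnPiece i l) := by
  intro u hu v hv
  rw [mem_columnPiece] at hu hv
  by_cases huv : u = v
  · subst huv; exact Relation.ReflTransGen.refl
  · refine Relation.ReflTransGen.single ⟨mem_columnPiece.2 hu, mem_columnPiece.2 hv, Or.inl ?_⟩
    rw [Prod.ext_iff] at huv
    omega

lemma isNecklaceWitness_column (i : ℕ) :
    IsNecklaceWitness archGrid (column i) (columnPiece i) := by
  refine ⟨fun n => ⟨by simp [columnPiece], by simp [columnPiece], strongOn_columnPiece i n⟩,
    ?_, fun a b => ⟨?_, fun hab => ?_⟩⟩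
  · ext v
    simp only [Set.mem_iUnion, mem_columnPiece, column, Set.mem_ofPred_eq]
    exact ⟨fun h => ⟨v.2, h, Or.inl rfl⟩, fun ⟨_, h⟩ => h.1⟩
  · rintro ⟨v, ha, hb⟩
    rw [mem_columnPiece] at ha hb
    omega
  · refine ⟨(i, max a b), ?_, ?_⟩ <;> rw [mem_columnPiece] <;> simp only [true_and] <;> omega

lemma attach_column (i : ℕ) : NecklaceAttachOK archGrid (column i) (columnPiece i) := by
  refine ⟨fun l ⟨m, hm⟩ => ?_, fun l hl => ?_⟩
  · rintro ⟨u, v⟩ ⟨huv, h⟩ ⟨u', v'⟩ ⟨huv', h'⟩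
    simp only [mem_columnPiece, column, Set.mem_ofPred_eq, archGrid] at huv h huv' h'
    simp only [Prod.ext_iff]
    rcases huv with huv | ⟨n, huv⟩ | ⟨n, huv⟩
    · omega
    all_goals
      rcases huv' with huv' | ⟨n', huv'⟩ | ⟨n', huv'⟩
      all_goals omega
  · rw [Set.eq_empty_iff_forall_notMem]
    rintro ⟨u, v⟩ ⟨-, h⟩
    have hempty : columnPiece i l \ (columnPiece i (l - 1) ∪ columnPiece i (l + 1)) = ∅ := by
      ext w
      simp only [Set.mem_sdiff, Set.mem_union, mem_columnPiece, Set.mem_empty_iff_false, iff_false]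
      omega
    simp [hempty] at h

lemma consecIn_of_getElem {α : Type*} {L : List α} {k : ℕ} (hk : k + 1 < L.length) :
    ConsecIn L L[k] L[k + 1] :=
  ⟨L.take k, L.drop (k + 2), by
    rw [← List.drop_eq_getElem_cons, ← List.drop_eq_getElem_cons, List.take_append_drop]⟩

lemma consecIn_girder_of_climb {n : ℕ} {u v : ℕ × ℕ} (huv : v.1 = u.1 + 1) (hn : v.1 ≤ n)
    (hu : u.2 = 4 * n + 3) (hv : v.2 = 4 * n + 2) : ConsecIn (girder n) u v := by
  have hk : 2 * u.1 + 1 + 1 < (girder n).length := by simp [girder]; omega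
  have h₁ : (girder n)[2 * u.1 + 1] = u := by
    simp only [girder, List.getElem_append, List.length_map, List.length_range,
      List.getElem_map, List.getElem_range, List.getElem_singleton]
    rw [dif_pos (by omega), Prod.ext_iff]
    simp only [climb]; omega
  have h₂ : (girder n)[2 * u.1 + 1 + 1] = v := by
    simp only [girder, List.getElem_append, List.length_map, List.length_range,
      List.getElem_map, List.getElem_range, List.getElem_singleton]
    rw [dif_pos (by omega), Prod.ext_iff]
    simp only [climb]; omega
  simpa only [h₁, h₂] using consecIn_of_getElem hk

lemma isNecklaceGridBase_archGrid :
    IsNecklaceGridBase archGrid column columnPiece girder where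
  disj i j hij := Set.disjoint_left.2 fun v hi hj => hij (hi.symm.trans hj)
  neckwit := isNecklaceWitness_column
  attach := attach_column
  gpath _ := isDipath_girder
  gdisj m n _ _ hmn v hm hn := by
    have := height_of_mem_girder hm
    have := height_of_mem_girder hn
    omega
  gheight := by
    rintro m n - hmn i l l' ⟨v, hv, hvl⟩ ⟨w, hw, hwl⟩
    have := height_of_mem_girder hv
    have := height_of_mem_girder hw
    rw [mem_columnPiece] at hvl hwl
    omega
  edges := by
    rintro u v (⟨h, -⟩ | ⟨n, h₁, h₂, h₃, h₄⟩ | ⟨n, hn, h₁, h₂, h₃, h₄⟩)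
    · exact Or.inl ⟨u.1, rfl, h.symm⟩
    · exact Or.inr ⟨n, by omega, consecIn_girder_of_climb h₁ h₂ h₃ h₄⟩
    · refine Or.inr ⟨n, hn, (List.range (2 * n + 1)).map (climb n), [], ?_⟩
      have hu : u = (n, 4 * n + 3) := Prod.ext h₁ h₂
      have hv : v = (0, 4 * n + 1) := Prod.ext h₃ h₄
      rw [hu, hv]
      exact girder_eq_append n

lemma visitsUp_climb (n : ℕ) :
    VisitsUp column n ((List.range (2 * n + 1)).map (climb n)) := by
  refine ⟨fun j hj => ⟨climb n (2 * j), ?_, ?_⟩, ?_, ?_⟩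
  · exact List.mem_map_of_mem (List.mem_range.2 (by omega))
  · simp [column, climb]
  · intro v hv j hj
    simp only [List.mem_map, List.mem_range] at hv
    obtain ⟨k, hk, rfl⟩ := hv
    simp only [column, climb, Set.mem_ofPred_eq] at hj
    omega
  · intro s t hs ht hst j j' hj hj'
    simp only [column, climb, Set.mem_ofPred_eq, List.get_eq_getElem, List.getElem_map,
      List.getElem_range] at hj hj'
    omega

lemma isDomDirNecklaceGridOut_archGrid :
    IsDomDirNecklaceGridOut archGrid column columnPiece girder := by
  refine ⟨isNecklaceGridBase_archGrid, fun n _ => ⟨_, _, girder_eq_append n, by simp, by simp,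
    ⟨climb n 0, by simp [column, climb], ?_⟩, ⟨climb n (2 * n), by simp [column, climb], ?_⟩,
    visitsUp_climb n, ⟨_, rfl, rfl⟩, ⟨_, rfl, rfl⟩, by simp [InternallyAvoids, Internals]⟩⟩
  · simp [List.range_succ_eq_map]
  · simp [List.range_succ]

/-! ### Two disjoint necklaces do not interleave on column `0` -/

/-- `b` describes a staircase inside `R` ending below `v` that separates the vertices under it,
among them `(0, x)`, from the vertices above it in the columns up to `v.1`. -/
def IsBarrier (R : Set (ℕ × ℕ)) (x : ℕ) (v : ℕ × ℕ) (b : ℕ → ℕ) : Prop :=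
  x < b 0 ∧ b v.1 ≤ v.2 ∧ (∀ j ≤ v.1, (j, b j) ∈ R) ∧
    ∀ j < v.1, ∀ k, k + 1 < b j → k < b (j + 1) ∨ (j + 1, k) ∈ R

lemma exists_isBarrier_or_arch {R : Set (ℕ × ℕ)} {x z : ℕ} (hxR : (0, x) ∉ R) (hxz : x < z)
    (hz : (0, z) ∈ R) {v : ℕ × ℕ} (hv : ReachOn archGrid R (0, z) v) :
    (∃ n b, 4 * n + 1 < x ∧ IsBarrier R x (n, 4 * n + 3) b) ∨ ∃ b, IsBarrier R x v b := by
  induction hv with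
  | refl => exact Or.inr ⟨fun _ => z, hxz, le_rfl, by simpa using hz, by simp⟩
  | @tail u v _ huv ih =>
    obtain ⟨-, hvR, huv⟩ := huv
    rcases ih with ih | ⟨b, hb0, hbu, hbR, hb⟩
    · exact Or.inl ih
    obtain ⟨i, h⟩ := u
    obtain ⟨i', h'⟩ := v
    simp only [archGrid] at huv hbu hbR hb
    rcases huv with ⟨rfl, rfl | rfl⟩ | ⟨n, rfl, hin, rfl, rfl⟩ | ⟨n, hn, rfl, rfl, rfl, rfl⟩
    · right
      by_cases hlt : b i ≤ h'
      · exact ⟨b, hb0, hlt, hbR, hb⟩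
      · refine ⟨Function.update b i h', ?_, by simp, fun j hj => ?_, fun j hj k hk => ?_⟩
        · by_cases hi : i = 0
          · subst hi
            have : h' ≠ x := fun e => hxR (e ▸ hvR)
            simp only [Function.update_self]; omega
          · rwa [Function.update_of_ne (Ne.symm hi)]
        · by_cases hji : j = i
          · subst hji; simpa using hvR
          · rw [Function.update_of_ne hji]; exact hbR j hj
        · simp only at hj
          rw [Function.update_of_ne hj.ne] at hk
          by_cases hji : j + 1 = i
          · subst hji
            rw [Function.update_self]
            rcases hb j hj k hk with hk' | hk'
            · by_cases hkh : k = h'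
              · exact Or.inr (hkh ▸ hvR)
              · left; omega
            · exact Or.inr hk'
          · rw [Function.update_of_ne hji]; exact hb j hj k hk
    · exact Or.inr ⟨b, hb0, by simp only; omega, hbR, hb⟩
    · right
      refine ⟨Function.update b (i + 1) (4 * n + 2), ?_, by simp, fun j hj => ?_,
        fun j hj k hk => ?_⟩
      · rwa [Function.update_of_ne (by omega)]
      · by_cases hji : j = i + 1
        · subst hji; simpa using hvR
        · rw [Function.update_of_ne hji]; exact hbR j (by simp only at hj; omega)
      · simp only at hj
        rw [Function.update_of_ne hj.ne] at hk
        by_cases hji : j = i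
        · subst hji
          rw [Function.update_self]
          left; omega
        · rw [Function.update_of_ne (by omega)]
          exact hb j (by omega) k hk
    · have hne : 4 * i + 1 ≠ x := fun e => hxR (e ▸ hvR)
      rcases Nat.lt_or_ge (4 * i + 1) x with hlt | hge
      · exact Or.inl ⟨i, b, hlt, hb0, hbu, hbR, hb⟩
      · exact Or.inr ⟨fun _ => 4 * i + 1, by simp only; omega, le_rfl, by simpa using hvR, by simp⟩

lemma IsBarrier.mem_of_reachOn {R N : Set (ℕ × ℕ)} {x n : ℕ} {b : ℕ → ℕ} (hRN : Disjoint R N)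
    (hn : 4 * n + 1 < x) (hb : IsBarrier R x (n, 4 * n + 3) b) {v : ℕ × ℕ}
    (hv : ReachOn archGrid N (0, x) v) : v.1 ≤ n ∧ v.2 < b v.1 := by
  obtain ⟨hb0, hbn, hbR, hb⟩ := hb
  simp only at hbn hbR hb
  induction hv with
  | refl => exact ⟨Nat.zero_le _, hb0⟩
  | @tail u v _ huv ih =>
    obtain ⟨-, hvN, huv⟩ := huv
    obtain ⟨i, h⟩ := u
    obtain ⟨i', h'⟩ := v
    have hvR : (i', h') ∉ R := fun hR => Set.disjoint_left.1 hRN hR hvN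
    obtain ⟨hin, hhb⟩ := ih
    simp only [archGrid] at huv hin hhb ⊢
    rcases huv with ⟨rfl, rfl | rfl⟩ | ⟨m, rfl, him, rfl, rfl⟩ | ⟨m, hm, rfl, rfl, rfl, rfl⟩
    · exact ⟨hin, by omega⟩
    · have : h + 1 ≠ b i := fun e => hvR (e ▸ hbR i hin)
      exact ⟨hin, by omega⟩
    · have hlt : i < n := by
        rcases hin.lt_or_eq with hlt | rfl
        · exact hlt
        · omega
      exact ⟨hlt, (hb i hlt _ hhb).resolve_right hvR⟩
    · have : i ≠ n := by rintro rfl; omega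
      exact ⟨Nat.zero_le _, by omega⟩

lemma not_interleave_column_zero {N N' : Set (ℕ × ℕ)} {H H' : ℕ → Set (ℕ × ℕ)}
    (hN : IsNecklaceWitness archGrid N H) (hN' : IsNecklaceWitness archGrid N' H')
    (hdisj : Disjoint N N') {x y z : ℕ} (hyx : y < x) (hxz : x < z) (hy : (0, y) ∈ N)
    (hz : (0, z) ∈ N) (hx : (0, x) ∈ N') : False := by
  have hxN : (0, x) ∉ N := fun h => Set.disjoint_left.1 hdisj h hx
  rcases exists_isBarrier_or_arch hxN hxz hz (hN.reachOn hz hy) with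
    ⟨n, b, hn, hb⟩ | ⟨b, hb0, hby, -⟩
  · refine hN'.infinite (Set.Finite.subset
      ((Set.finite_Iic n).biUnion fun i _ => (Set.finite_Iio (b i)).image (Prod.mk i)) ?_)
    intro v hv
    have := hb.mem_of_reachOn hdisj hn (hN'.reachOn hx hv)
    exact Set.mem_biUnion this.1 ⟨v.2, this.2, rfl⟩
  · simp only at hby
    omega

lemma finite_column_zero_of_disjoint {N N' : Set (ℕ × ℕ)} {H H' : ℕ → Set (ℕ × ℕ)}
    (hN : IsNecklaceWitness archGrid N H) (hN' : IsNecklaceWitness archGrid N' H')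
    (hdisj : Disjoint N N') (hinf : {x | (0, x) ∈ N}.Infinite) :
    {x | (0, x) ∈ N'}.Finite := by
  obtain ⟨y, hy⟩ := hinf.nonempty
  refine (Set.finite_Iic y).subset fun x hx => ?_
  by_contra hlt
  obtain ⟨z, hz, hxz⟩ := hinf.exists_gt x
  exact not_interleave_column_zero hN hN' hdisj (not_le.1 hlt) hxz hy hz hx

/-! ### Necklaces meeting column `0` finitely often -/

lemma column_le_of_reachOn {N : Set (ℕ × ℕ)} (hN : ∀ v ∈ N, v.1 ≠ 0) {u v : ℕ × ℕ}
    (huv : ReachOn archGrid N u v) : u.1 ≤ v.1 := by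
  induction huv with
  | refl => exact le_rfl
  | @tail v w _ hvw ih =>
    obtain ⟨-, hw, hvw⟩ := hvw
    have := hN w hw
    rcases hvw with h | ⟨n, h⟩ | ⟨n, h⟩ <;> omega

lemma mem_of_reachOn_of_subset_column {N : Set (ℕ × ℕ)} {i k : ℕ} (hN : N ⊆ column i)
    {u v : ℕ × ℕ} (hu : u ∈ N) (huv : ReachOn archGrid N u v) (huk : u.2 ≤ k) (hkv : k ≤ v.2) :
    (i, k) ∈ N := by
  induction huv with
  | refl =>
    have : u = (i, k) := Prod.ext (hN hu) (le_antisymm huk hkv)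
    exact this ▸ hu
  | @tail v w _ hvw ih =>
    obtain ⟨hv, hw, hvw⟩ := hvw
    have hvi : v.1 = i := hN hv
    have hwi : w.1 = i := hN hw
    by_cases hk : k ≤ v.2
    · exact ih hk
    · have : w = (i, k) := by
        refine Prod.ext hwi ?_
        rcases hvw with h | ⟨n, h⟩ | ⟨n, h⟩ <;> omega
      exact this ▸ hw

lemma exists_column_of_finite {N : Set (ℕ × ℕ)} {H : ℕ → Set (ℕ × ℕ)}
    (hN : IsNecklaceWitness archGrid N H) (hfin : {x | (0, x) ∈ N}.Finite) :
    ∃ i, (N \ column i).Finite ∧ (column i \ N).Finite := by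
  obtain ⟨L, hL⟩ := hN.eventually_notMem (hfin.image (Prod.mk 0))
  have hT := hN.shift L
  set T := ⋃ l, H (L + l) with hTdef
  have hTN : T ⊆ N := Set.iUnion_subset fun l => hN.subset _
  have hT0 : ∀ v ∈ T, v.1 ≠ 0 := by
    rintro ⟨i, k⟩ hv rfl
    obtain ⟨l, hl⟩ := Set.mem_iUnion.1 hv
    exact hL (L + l) (Nat.le_add_right _ _) _ ⟨k, hTN hv, rfl⟩ hl
  obtain ⟨u, hu⟩ := hT.infinite.nonempty
  have hTcol : T ⊆ column u.1 := fun v hv => le_antisymm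
    (column_le_of_reachOn hT0 (hT.reachOn hv hu)) (column_le_of_reachOn hT0 (hT.reachOn hu hv))
  refine ⟨u.1, ?_, ?_⟩
  · refine ((Set.finite_Iio L).biUnion fun l _ => (hN.1 l).1).subset ?_
    rintro v ⟨hvN, hv⟩
    rw [hN.2.1] at hvN
    obtain ⟨l, hl⟩ := Set.mem_iUnion.1 hvN
    refine Set.mem_biUnion (Set.mem_Iio.2 (not_le.1 fun hLl => hv (hTcol ?_))) hl
    exact Set.mem_iUnion.2 ⟨l - L, by rwa [Nat.add_sub_cancel' hLl]⟩
  · refine ((Set.finite_Iio u.2).image (Prod.mk u.1)).subset ?_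
    rintro v ⟨hvcol, hvN⟩
    refine ⟨v.2, Set.mem_Iio.2 <| not_le.1 fun huv => hvN (hTN ?_), Prod.ext hvcol.symm rfl⟩
    obtain ⟨w, hw, hvw⟩ : ∃ w ∈ T, v.2 ≤ w.2 := by
      by_contra! hcon
      refine hT.infinite (((Set.finite_Iio v.2).image (Prod.mk u.1)).subset fun w hw => ?_)
      exact ⟨w.2, hcon w hw, Prod.ext (hTcol hw).symm rfl⟩
    have := mem_of_reachOn_of_subset_column hTcol hu (hT.reachOn hu hw) huv hvw
    rwa [← show v.1 = u.1 from hvcol] at this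

/-! ### No bidirected necklace grid -/

lemma column_infinite (i : ℕ) : (column i).Infinite := (isNecklaceWitness_column i).infinite

lemma exists_mem_column_of_descent {L : List (ℕ × ℕ)} (hL : L.IsChain archGrid.Adj)
    {a b c s t : ℕ} (hab : a < b) (hbc : b < c) (hst : s ≤ t) (ht : t < L.length)
    (hs : L[s].1 = c) (htb : L[t].1 = b) :
    ∃ k, ∃ hk : k < t, L[k].1 = a := by
  by_contra! hcon
  have key : ∀ k, s ≤ k → ∀ hk : k ≤ t, L[k].1 < a ∨ c ≤ L[k].1 := by
    intro k hsk
    induction k, hsk using Nat.le_induction with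
    | base => exact fun _ => Or.inr hs.ge
    | succ k hsk ih =>
      intro hk
      have hadj := List.isChain_iff_getElem.1 hL k (by omega)
      have hne : L[k + 1].1 ≠ a := by
        rcases hk.lt_or_eq with hlt | rfl
        · exact hcon _ hlt
        · omega
      have := ih (by omega)
      rcases hadj with h | ⟨n, h⟩ | ⟨n, h⟩ <;> omega
  have := key t hst le_rfl
  omega

lemma exists_mem_exceptional {neck : ℕ → Set (ℕ × ℕ)} {n p q s a b c : ℕ} {W : List (ℕ × ℕ)}
    (hpq : p < q) (hqs : q < s)
    (hsn : s ≤ n) (hab : a < b) (hbc : b < c) (hW : W.IsChain archGrid.Adj)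
    (hdown : VisitsDown neck n W) :
    ∃ v ∈ W, v ∈ (neck s \ column c) ∪ (neck q \ column b) ∪ (column a \ neck p) := by
  by_contra! hcon
  simp only [Set.mem_union, Set.mem_sdiff, not_or, not_and, not_not] at hcon
  obtain ⟨hmeet, -, hord⟩ := hdown
  obtain ⟨u, huW, hu⟩ := hmeet s hsn
  obtain ⟨w, hwW, hw⟩ := hmeet q (by omega)
  obtain ⟨i, hi, rfl⟩ := List.getElem_of_mem huW
  obtain ⟨j, hj, rfl⟩ := List.getElem_of_mem hwW
  have hij : i ≤ j := by
    by_contra! hji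
    have := hord j i hj hi hji q s hw hu
    omega
  obtain ⟨k, hk, hka⟩ := exists_mem_column_of_descent hW hab hbc hij hj
    ((hcon _ huW).1.1 hu) ((hcon _ hwW).1.2 hw)
  have := hord k j (by omega) hj hk p q ((hcon _ (List.getElem_mem _)).2 hka) hw
  omega

lemma not_isBidirNecklaceGrid_of_le_archGrid {B : Digraph (ℕ × ℕ)} {neck : ℕ → Set (ℕ × ℕ)}
    {H : ℕ → ℕ → Set (ℕ × ℕ)} {Gird : ℕ → List (ℕ × ℕ)}
    (hB : ∀ u v, B.Adj u v → archGrid.Adj u v) : ¬ IsBidirNecklaceGrid B neck H Gird := by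
  rintro ⟨hbase, hgird⟩
  have hneck : ∀ i, IsNecklaceWitness archGrid (neck i) (H i) := fun i =>
    (hbase.neckwit i).mono hB
  obtain ⟨m, hm⟩ : ∃ m, ∀ j, {x | (0, x) ∈ neck (m + j)}.Finite := by
    by_cases h : ∃ i, {x | (0, x) ∈ neck i}.Infinite
    · obtain ⟨i, hi⟩ := h
      exact ⟨i + 1, fun j => finite_column_zero_of_disjoint (hneck i) (hneck _)
        (hbase.disj _ _ (by omega)) hi⟩
    · exact ⟨0, fun j => Set.not_infinite.1 fun hj => h ⟨_, hj⟩⟩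
  choose col hcol hcol' using fun j => exists_column_of_finite (hneck (m + j)) (hm j)
  have hinj : Function.Injective col := by
    intro i j hij
    by_contra hne
    have hd := hbase.disj (m + i) (m + j) (by omega)
    refine column_infinite (col i) (((hcol' i).union (hij ▸ hcol' j)).subset fun v hv => ?_)
    by_cases hvi : v ∈ neck (m + i)
    · exact Or.inr ⟨hv, Set.disjoint_left.1 hd hvi⟩
    · exact Or.inl ⟨hv, hvi⟩
  have hlim := hinj.nat_tendsto_atTop
  obtain ⟨q, hq, hpq⟩ := ((hlim.eventually_gt_atTop (col 0)).and
    (Filter.eventually_gt_atTop 0)).exists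
  obtain ⟨s, hs, hqs⟩ := ((hlim.eventually_gt_atTop (col q)).and
    (Filter.eventually_gt_atTop q)).exists
  have hF := ((hcol s).union (hcol q)).union (hcol' 0)
  have hmeet : ∀ n, ∃ v ∈ Gird (m + s + n), v ∈ (neck (m + s) \ column (col s)) ∪
      (neck (m + q) \ column (col q)) ∪ (column (col 0) \ neck (m + 0)) := by
    intro n
    obtain ⟨U, W, hUW, -, -, -, -, -, -, -, hW⟩ := hgird (m + s + n) (by omega)
    have hchain : (Gird (m + s + n)).IsChain B.Adj := (hbase.gpath _ (by omega)).2.2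
    rw [hUW] at hchain ⊢
    obtain ⟨v, hv, hv'⟩ := exists_mem_exceptional (by omega : m + 0 < m + q)
      (by omega : m + q < m + s) (by omega) hq hs (hchain.right_of_append.imp hB) hW
    exact ⟨v, List.mem_append_right _ hv, hv'⟩
  choose f hf hfF using hmeet
  refine Set.infinite_of_injective_forall_mem (fun i j hij => ?_) hfF hF
  by_contra hne
  exact hbase.gdisj _ _ (by omega) (by omega) (by omega : m + s + i ≠ m + s + j)
    (f i) (hf i) (hij ▸ hf j)

/-- Lemma 7.1: there exists an (outward-oriented) dominated directed necklace grid, with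
vertical necklaces bidirected rays and arches single edges, containing no bidirected
necklace grid as a subgraph. -/
theorem stmt14 : ∃ (V : Type) (G : Digraph V) (neck : ℕ → Set V)
    (H : ℕ → ℕ → Set V) (Gird : ℕ → List V) (r : ℕ → ℕ → V) (archE : ℕ → V × V),
    IsDomDirNecklaceGridOut G neck H Gird ∧
    NecksAreBidirRays G neck r ∧ ArchesAreEdges neck Gird archE ∧
    ¬ ∃ (B : Digraph V) (neck' : ℕ → Set V) (H' : ℕ → ℕ → Set V) (Gird' : ℕ → List V),
      (∀ u v, B.Adj u v → G.Adj u v) ∧ IsBidirNecklaceGrid B neck' H' Gird' := by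
  refine ⟨ℕ × ℕ, archGrid, column, columnPiece, girder, Prod.mk,
    fun n => ((n, 4 * n + 3), (0, 4 * n + 1)), isDomDirNecklaceGridOut_archGrid, fun i => ?_,
    fun n _ => ⟨_, girder_eq_append n, rfl, rfl⟩, ?_⟩
  · refine ⟨Prod.mk_right_injective i, ?_, fun n => ⟨Or.inl ⟨rfl, Or.inr rfl⟩,
      Or.inl ⟨rfl, Or.inl rfl⟩⟩⟩
    ext v
    exact ⟨fun hv => ⟨v.2, Prod.ext (Eq.symm hv) rfl⟩, fun ⟨k, hk⟩ => hk ▸ rfl⟩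
  · rintro ⟨B, neck', H', Gird', hB, hgrid⟩
    exact not_isBidirNecklaceGrid_of_le_archGrid hB hgrid
end
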